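/- For all constants K, K', K'' > 0 and β ≥ 0 there exists a constant C_β > 0 (depending only on β, K, K', K'') such that the following holds. Let n, d ∈ ℕ with n ≥ 2, d ≤ n² and d ≥ (log n)^8, let W satisfy Assumptions 1–4 with constants K, K', β, and assume in addition that η has nonnegative entries, every row sum and every column sum of η is equal to 1 (η doubly stochastic), and s_2(η) ≤ K''/√d. Let W_1,…,W_d be independent copies of W and set M_Φ = (1/d) ∑_{s=1}^d W_s ⊗ conj(W_s) ∈ M_{n²}(ℂ). Then with probability at least 1 − C_β/n, M_Φ has an eigenvalue μ (a root of its characteristic polynomial) with |μ| ≥ 1 − C_β/√d; equivalently, the spectral radius of M_Φ is at least 1 − C_β/√d. -/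

import Mathlib

open MeasureTheory ProbabilityTheory Matrix
open scoped Kronecker ENNReal

/-- The (Borel) measurable space structure on matrices, obtained entrywise. -/
noncomputable instance matrixMeasurableSpace {m n α : Type*} [MeasurableSpace α] :
    MeasurableSpace (Matrix m n α) :=
  inferInstanceAs (MeasurableSpace (m → n → α))

/-- The ℓ²→ℓ² operator norm of a square matrix over `ℝ` or `ℂ`. -/
noncomputable def Matrix.opNorm2 {𝕜 : Type*} [RCLike 𝕜] {n : Type*} [Fintype n] [DecidableEq n]
    (A : Matrix n n 𝕜) : ℝ :=
  ‖LinearMap.toContinuousLinearMap (Matrix.toEuclideanLin A)‖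

/-- `Matrix.sval A k` is the `(k+1)`-st largest singular value of `A`, characterized via
best approximation in operator norm by matrices of rank at most `k`
(the Eckart–Young–Mirsky theorem); in particular `Matrix.sval A 0` is the largest singular
value `s_1(A)` and `Matrix.sval A 1` is the second largest singular value `s_2(A)`. -/
noncomputable def Matrix.sval {𝕜 : Type*} [RCLike 𝕜] {n : Type*} [Fintype n] [DecidableEq n]
    (A : Matrix n n 𝕜) (k : ℕ) : ℝ :=
  ⨅ B : {B : Matrix n n 𝕜 // B.rank ≤ k}, Matrix.opNorm2 (A - B.1)

/-- Entrywise expectation of a random matrix. -/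
noncomputable def matExp {Ω : Type*} [MeasurableSpace Ω] (μ : Measure Ω)
    {m n : Type*} (W : Ω → Matrix m n ℂ) : Matrix m n ℂ :=
  Matrix.of fun i j => ∫ ω, W ω i j ∂μ

/-- Assumptions 1–4 of the paper on an `n × n` random matrix `W` with variance profile `η`,
with constants `K` (Assumption 3), `K'` (Assumption 4) and parameter `β ≥ 0`:
the entries are independent, centered, have variances `η i j`, the variance matrix `η` is
doubly sub-stochastic, the entries satisfy the moment growth condition
`(E|W_{ij}|^{2p})^{1/p} ≤ K p^β η_{ij}`, and `max η_{ij} ≤ K'/(log n)^{α_β}` where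
`α_β = max (β/2) 2`. (Membership in every `L^p` is included so that all moments exist.) -/
structure PaperAssumptions {Ω : Type*} [MeasurableSpace Ω] (μ : Measure Ω)
    (n : ℕ) (K K' β : ℝ) (η : Matrix (Fin n) (Fin n) ℝ)
    (W : Ω → Matrix (Fin n) (Fin n) ℂ) : Prop where
  entries_indep : iIndepFun
      (fun (p : Fin n × Fin n) ω => W ω p.1 p.2) μ
  entries_memLp : ∀ i j (p : ℕ), MemLp (fun ω => W ω i j) p μ
  entries_centered : ∀ i j, ∫ ω, W ω i j ∂μ = 0
  entries_variance : ∀ i j, ∫ ω, ‖W ω i j‖ ^ 2 ∂μ = η i j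
  row_sums : ∀ i, ∑ j, η i j ≤ 1
  col_sums : ∀ j, ∑ i, η i j ≤ 1
  moment_growth : ∀ p : ℕ, 1 ≤ p → ∀ i j,
      (∫ ω, ‖W ω i j‖ ^ (2 * p) ∂μ) ^ ((1 : ℝ) / p) ≤ K * (p : ℝ) ^ β * η i j
  max_variance : ∀ i j, η i j ≤ K' / Real.log n ^ max (β / 2) 2

/-!
Cut off each entry of `W s` at level `‖W s i j‖ ^ 2 ≤ η i j * θ`, where `θ ^ 16 = d`, and recenter;
this splits `W s = T s + B s`. With high probability the following holds.

* The Kraus matrix of the `T s` is within `ε = O(θ⁻⁴)` of the projection onto the maximally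
  entangled vector `vec 1`: its fluctuations obey a noncommutative Khintchine inequality, proved
  with exchangeable pairs, and its mean acts as `η`, up to the truncation error, on the span of the
  `e_i ⊗ e_i`, so that its distance to the projection is governed by `s_2(η)`.
* By Chebyshev's inequality, the mean squared Frobenius norm of the `T s` is at least
  `(1 - O(1 / √d)) n`, and that of the `B s` is `O(n / d)`.

The rest is deterministic. If every eigenvalue of a completely positive map `Φ` has modulus less
than `r`, there is a positive definite `X` with `Φ X ≤ r X`. Scale `X` so that the Cayley transform
`F` of `X ^ 2` is traceless; then `tr ((1 - F) Φ(1 + F)) ≤ r (n - tr (F ^ 2) / 2)`. As `F` is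
traceless, the error `ε` enters a lower bound for the left-hand side only through `ε tr (F ^ 2)` and
`ε √(n tr (F ^ 2))`. Absorbing these in `tr (F ^ 2) / 2` costs `ε ^ 2 = O(1 / √d)` rather than `ε`.
-/

open scoped ComplexOrder MatrixOrder Matrix.Norms.L2Operator

/-! ### Traces of powers of Hermitian matrices -/

section TracePowers

variable {ι : Type*} [Fintype ι] [DecidableEq ι]

lemma exists_unitary_diagonal_pow {A : Matrix ι ι ℂ} (hA : A.IsHermitian) :
    ∃ (U : unitaryGroup ι ℂ) (a : ι → ℝ),
      ∀ k : ℕ, A ^ k = (U : Matrix ι ι ℂ) * diagonal (fun i => ((a i ^ k : ℝ) : ℂ)) *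
        (U : Matrix ι ι ℂ)ᴴ := by
  refine ⟨hA.eigenvectorUnitary, hA.eigenvalues, fun k => ?_⟩
  conv_lhs => rw [hA.spectral_theorem, ← map_pow, diagonal_pow, Unitary.conjStarAlgAut_apply]
  congr 3
  ext i
  simp

lemma trace_mul_diagonal_mul_conjTranspose {κ : Type*} [Fintype κ] [DecidableEq κ]
    (G : Matrix ι κ ℂ) (a : ι → ℝ) (b : κ → ℝ) :
    (diagonal (fun i => (a i : ℂ)) * G * diagonal (fun j => (b j : ℂ)) * Gᴴ).trace.re =
      ∑ i, ∑ j, ‖G i j‖ ^ 2 * (a i * b j) := by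
  simp only [Matrix.trace, Matrix.diag_apply, Matrix.mul_apply (M := _ * _ * _),
    Matrix.mul_diagonal, Matrix.diagonal_mul, conjTranspose_apply, Complex.re_sum]
  refine Finset.sum_congr rfl fun i _ => Finset.sum_congr rfl fun j _ => ?_
  have hnorm : (‖G i j‖ ^ 2 : ℂ) = G i j * star (G i j) := (Complex.mul_conj' _).symm
  rw [show (a i : ℂ) * G i j * b j * star (G i j) = ((‖G i j‖ ^ 2 * (a i * b j) : ℝ) : ℂ) by
    push_cast; rw [hnorm]; ring, Complex.ofReal_re]

lemma exists_trace_pow_mul_pow_eq_sum {A B : Matrix ι ι ℂ}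
    (hA : A.IsHermitian) (hB : B.IsHermitian) :
    ∃ (a b : ι → ℝ) (w : ι → ι → ℝ), (∀ s t, 0 ≤ w s t) ∧
      ∀ i j : ℕ, (A ^ i * B ^ j).trace.re = ∑ s, ∑ t, w s t * (a s ^ i * b t ^ j) := by
  obtain ⟨U, a, hA⟩ := exists_unitary_diagonal_pow hA
  obtain ⟨V, b, hB⟩ := exists_unitary_diagonal_pow hB
  refine ⟨a, b, fun s t => ‖((U : Matrix ι ι ℂ)ᴴ * (V : Matrix ι ι ℂ)) s t‖ ^ 2,
    fun s t => by positivity, fun i j => ?_⟩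
  rw [← trace_mul_diagonal_mul_conjTranspose, hA, hB, conjTranspose_mul,
    conjTranspose_conjTranspose]
  simp only [Matrix.mul_assoc]
  rw [Matrix.trace_mul_comm]
  simp only [Matrix.mul_assoc]

lemma pow_mul_pow_add_pow_mul_pow_le (x y : ℝ) {i j m : ℕ} (hij : i + j = 2 * m) :
    x ^ i * y ^ j + x ^ j * y ^ i ≤ x ^ (2 * m) + y ^ (2 * m) := by
  have even_pow_eq (z : ℝ) : z ^ (2 * m) = |z| ^ i * |z| ^ j := by
    rw [← pow_add, hij, pow_mul, pow_mul, sq_abs]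
  have mixed_le (k l : ℕ) : x ^ k * y ^ l ≤ |x| ^ k * |y| ^ l := by
    rw [← abs_pow, ← abs_pow, ← abs_mul]
    exact le_abs_self _
  have same_sign : 0 ≤ (|x| ^ i - |y| ^ i) * (|x| ^ j - |y| ^ j) := by
    rcases le_total |x| |y| with h | h
    · exact mul_nonneg_of_nonpos_of_nonpos (sub_nonpos.2 (by gcongr)) (sub_nonpos.2 (by gcongr))
    · exact mul_nonneg (sub_nonneg.2 (by gcongr)) (sub_nonneg.2 (by gcongr))
  rw [even_pow_eq, even_pow_eq]
  linarith [mixed_le i j, mixed_le j i]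

lemma sum_pow_mul_pow_le (x y : ℝ) (m : ℕ) :
    ∑ i ∈ Finset.range (2 * m + 1), x ^ i * y ^ (2 * m - i) ≤
      (2 * m + 1) / 2 * (x ^ (2 * m) + y ^ (2 * m)) := by
  have hreflect := Finset.sum_range_reflect (fun i => x ^ i * y ^ (2 * m - i)) (2 * m + 1)
  have hpair : ∑ i ∈ Finset.range (2 * m + 1), (x ^ i * y ^ (2 * m - i) +
      x ^ (2 * m + 1 - 1 - i) * y ^ (2 * m - (2 * m + 1 - 1 - i))) ≤
      ∑ _i ∈ Finset.range (2 * m + 1), (x ^ (2 * m) + y ^ (2 * m)) := by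
    refine Finset.sum_le_sum fun i hi => ?_
    have hi := Finset.mem_range.1 hi
    rw [show 2 * m - (2 * m + 1 - 1 - i) = i by omega, Nat.add_sub_cancel]
    exact pow_mul_pow_add_pow_mul_pow_le x y (by omega)
  rw [Finset.sum_add_distrib, hreflect, Finset.sum_const, Finset.card_range, nsmul_eq_mul] at hpair
  push_cast at hpair
  linarith

lemma sub_mul_pow_sub_pow_le (x y : ℝ) (m : ℕ) :
    (x - y) * (x ^ (2 * m + 1) - y ^ (2 * m + 1)) ≤
      (2 * m + 1) / 2 * ((x - y) ^ 2 * (x ^ (2 * m) + y ^ (2 * m))) := by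
  have hgeom := (Commute.all x y).mul_geom_sum₂ (2 * m + 1)
  rw [Nat.add_sub_cancel] at hgeom
  rw [← hgeom]
  nlinarith [mul_le_mul_of_nonneg_left (sum_pow_mul_pow_le x y m) (sq_nonneg (x - y))]

/-- The trace is cyclic, so the trace of the product of `(A - B) ^ 2` and a power of `A` or of `B`
only involves the quantities `tr (A ^ i * B ^ j)`. -/
lemma trace_sq_sub_mul_pow_add_pow (A B : Matrix ι ι ℂ) (m : ℕ) :
    ((A - B) ^ 2 * (A ^ m + B ^ m)).trace =
      (A ^ (m + 2) * B ^ 0).trace + (A ^ 2 * B ^ m).trace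
        - 2 * (A ^ (m + 1) * B ^ 1).trace - 2 * (A ^ 1 * B ^ (m + 1)).trace
        + (A ^ m * B ^ 2).trace + (A ^ 0 * B ^ (m + 2)).trace := by
  have hABA : (A * (B * A ^ m)).trace = (A ^ m * (A * B)).trace := by
    rw [← Matrix.mul_assoc, Matrix.trace_mul_comm]
  have hBAA : (B * (A * A ^ m)).trace = (A ^ m * (A * B)).trace := by
    rw [Matrix.trace_mul_comm, ← pow_succ', pow_succ, Matrix.mul_assoc]
  have hBAB : (B * (A * B ^ m)).trace = (A * (B * B ^ m)).trace := by
    rw [Matrix.trace_mul_comm, Matrix.mul_assoc, ← pow_succ, pow_succ']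
  have hBBA : (B * (B * A ^ m)).trace = (A ^ m * (B * B)).trace := by
    rw [← Matrix.mul_assoc, Matrix.trace_mul_comm]
  have hAAA : A * (A * A ^ m) = A ^ m * (A * A) := by
    rw [← pow_succ', ← pow_succ', pow_succ, pow_succ, Matrix.mul_assoc]
  simp only [pow_zero, pow_two (A - B), pow_succ' B, pow_succ A, Matrix.mul_assoc, Matrix.one_mul,
    Matrix.mul_one, sub_mul, mul_sub, mul_add, trace_sub, trace_add, hABA, hBAA, hBAB, hBBA, hAAA]
  ring

lemma trace_sub_mul_pow_sub_pow_le {A B : Matrix ι ι ℂ}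
    (hA : A.IsHermitian) (hB : B.IsHermitian) (m : ℕ) :
    ((A - B) * (A ^ (2 * m + 1) - B ^ (2 * m + 1))).trace.re ≤
      (2 * m + 1) / 2 * ((A - B) ^ 2 * (A ^ (2 * m) + B ^ (2 * m))).trace.re := by
  obtain ⟨a, b, w, hw, htrace⟩ := exists_trace_pow_mul_pow_eq_sum hA hB
  have hleft : ((A - B) * (A ^ (2 * m + 1) - B ^ (2 * m + 1))).trace.re =
      ∑ s, ∑ t, w s t * ((a s - b t) * (a s ^ (2 * m + 1) - b t ^ (2 * m + 1))) := by
    have hexpand : ((A - B) * (A ^ (2 * m + 1) - B ^ (2 * m + 1))).trace =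
        (A ^ (2 * m + 2) * B ^ 0).trace - (A ^ 1 * B ^ (2 * m + 1)).trace
          - (A ^ (2 * m + 1) * B ^ 1).trace + (A ^ 0 * B ^ (2 * m + 2)).trace := by
      simp only [sub_mul, mul_sub, pow_zero, one_mul, mul_one, trace_sub, pow_one]
      rw [Matrix.trace_mul_comm B (A ^ _), ← pow_succ', ← pow_succ']
      ring
    simp only [hexpand, Complex.add_re, Complex.sub_re, htrace, ← Finset.sum_add_distrib,
      ← Finset.sum_sub_distrib]
    exact Finset.sum_congr rfl fun s _ => Finset.sum_congr rfl fun t _ => by ring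
  have hright : ((A - B) ^ 2 * (A ^ (2 * m) + B ^ (2 * m))).trace.re =
      ∑ s, ∑ t, w s t * ((a s - b t) ^ 2 * (a s ^ (2 * m) + b t ^ (2 * m))) := by
    have re_two_mul (z : ℂ) : (2 * z).re = 2 * z.re := by simp
    simp only [trace_sq_sub_mul_pow_add_pow, Complex.add_re, Complex.sub_re, re_two_mul, htrace,
      Finset.mul_sum, ← Finset.sum_add_distrib, ← Finset.sum_sub_distrib]
    exact Finset.sum_congr rfl fun s _ => Finset.sum_congr rfl fun t _ => by ring
  rw [hleft, hright]
  simp only [Finset.mul_sum]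
  refine Finset.sum_le_sum fun s _ => Finset.sum_le_sum fun t _ => ?_
  linarith [mul_le_mul_of_nonneg_left (sub_mul_pow_sub_pow_le (a s) (b t) m) (hw s t)]

lemma norm_pow_le_trace_pow {X : Matrix ι ι ℂ} (hX : X.IsHermitian) {p : ℕ} (hp : p ≠ 0) :
    ‖X‖ ^ (2 * p) ≤ (X ^ (2 * p)).trace.re := by
  obtain ⟨U, a, hpow⟩ := exists_unitary_diagonal_pow hX
  have hnorm : ‖X‖ = ‖a‖ := by
    have hX1 := hpow 1
    simp only [pow_one] at hX1
    rw [hX1, ← star_eq_conjTranspose, ← Unitary.coe_star, CStarRing.norm_mul_coe_unitary,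
      CStarRing.norm_coe_unitary_mul, l2_opNorm_diagonal]
    simp [Pi.norm_def]
  have htrace : (X ^ (2 * p)).trace.re = ∑ i, a i ^ (2 * p) := by
    rw [hpow, Matrix.trace_mul_comm, ← Matrix.mul_assoc, ← star_eq_conjTranspose,
      Unitary.coe_star_mul_self, Matrix.one_mul, trace_diagonal, Complex.re_sum]
    simp only [Complex.ofReal_re]
  rw [hnorm, htrace]
  rcases isEmpty_or_nonempty ι with _ | _
  · simp [Subsingleton.elim a 0, hp]
  obtain ⟨i, hi⟩ := Finite.exists_max fun i => ‖a i‖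
  calc ‖a‖ ^ (2 * p) ≤ ‖a i‖ ^ (2 * p) := by
        gcongr
        exact (pi_norm_le_iff_of_nonneg (norm_nonneg _)).2 hi
    _ = a i ^ (2 * p) := by rw [Real.norm_eq_abs, (even_two_mul p).pow_abs]
    _ ≤ ∑ i, a i ^ (2 * p) :=
        Finset.single_le_sum (fun j _ => (even_two_mul p).pow_nonneg (a j)) (Finset.mem_univ i)

end TracePowers

/-! ### Bounded measurable functions -/

instance matrixBorelSpace {ι : Type*} [Countable ι] : BorelSpace (Matrix ι ι ℂ) :=
  inferInstanceAs (BorelSpace (ι → ι → ℂ))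

/-- A measurable function with bounded norm. Such functions are integrable against every finite
measure, and so are all noncommutative polynomials in them. -/
structure BoundedMeasurable {Θ V : Type*} [MeasurableSpace Θ] [Norm V] [MeasurableSpace V]
    (f : Θ → V) : Prop where
  measurable : Measurable f
  bounded : ∃ C : ℝ, ∀ x, ‖f x‖ ≤ C

namespace BoundedMeasurable

variable {Θ Θ' V : Type*} [MeasurableSpace Θ] [MeasurableSpace Θ'] [MeasurableSpace V]

lemma comp [Norm V] {f : Θ → V} (hf : BoundedMeasurable f) {g : Θ' → Θ} (hg : Measurable g) :
    BoundedMeasurable fun x => f (g x) :=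
  ⟨hf.measurable.comp hg, hf.bounded.imp fun _ hC x => hC (g x)⟩

lemma const [Norm V] (c : V) : BoundedMeasurable fun _ : Θ => c :=
  ⟨measurable_const, ‖c‖, fun _ => le_rfl⟩

lemma clm_apply {W : Type*} [NormedAddCommGroup V] [NormedSpace ℝ V] [OpensMeasurableSpace V]
    [NormedAddCommGroup W] [NormedSpace ℝ W] [MeasurableSpace W] [BorelSpace W]
    {f : Θ → V} (hf : BoundedMeasurable f) (L : V →L[ℝ] W) :
    BoundedMeasurable fun x => L (f x) := by
  obtain ⟨C, hC⟩ := hf.bounded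
  exact ⟨L.continuous.measurable.comp hf.measurable, ‖L‖ * C, fun x => L.le_opNorm_of_le (hC x)⟩

section AddGroup

variable [NormedAddCommGroup V] [BorelSpace V] [SecondCountableTopology V] {f g : Θ → V}

lemma integrable (hf : BoundedMeasurable f) (μ : Measure Θ) [IsFiniteMeasure μ] :
    Integrable f μ := by
  obtain ⟨C, hC⟩ := hf.bounded
  exact .of_bound hf.measurable.aestronglyMeasurable C (.of_forall hC)

lemma add (hf : BoundedMeasurable f) (hg : BoundedMeasurable g) :
    BoundedMeasurable fun x => f x + g x := by
  obtain ⟨C, hC⟩ := hf.bounded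
  obtain ⟨D, hD⟩ := hg.bounded
  exact ⟨hf.measurable.add hg.measurable, C + D, fun x => norm_add_le_of_le (hC x) (hD x)⟩

lemma sub (hf : BoundedMeasurable f) (hg : BoundedMeasurable g) :
    BoundedMeasurable fun x => f x - g x := by
  obtain ⟨C, hC⟩ := hf.bounded
  obtain ⟨D, hD⟩ := hg.bounded
  exact ⟨hf.measurable.sub hg.measurable, C + D, fun x => norm_sub_le_of_le (hC x) (hD x)⟩

lemma sum {I : Type*} [Fintype I] {f : I → Θ → V} (hf : ∀ i, BoundedMeasurable (f i)) :
    BoundedMeasurable fun x => ∑ i, f i x := by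
  choose C hC using fun i => (hf i).bounded
  exact ⟨Finset.measurable_sum _ fun i _ => (hf i).measurable, ∑ i, C i,
    fun x => norm_sum_le_of_le _ fun i _ => hC i x⟩

end AddGroup

section Ring

variable [NormedRing V] [BorelSpace V] [SecondCountableTopology V] {f g : Θ → V}

lemma mul (hf : BoundedMeasurable f) (hg : BoundedMeasurable g) :
    BoundedMeasurable fun x => f x * g x := by
  obtain ⟨C, hC⟩ := hf.bounded
  obtain ⟨D, hD⟩ := hg.bounded
  exact ⟨hf.measurable.mul hg.measurable, C * D, fun x => norm_mul_le_of_le (hC x) (hD x)⟩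

lemma pow (hf : BoundedMeasurable f) (k : ℕ) : BoundedMeasurable fun x => f x ^ k := by
  induction k with
  | zero => simpa only [pow_zero] using const 1
  | succ k ih => simpa only [pow_succ] using ih.mul hf

end Ring

lemma trace_re {ι : Type*} [Fintype ι] [DecidableEq ι] {F : Θ → Matrix ι ι ℂ}
    (hF : BoundedMeasurable F) : BoundedMeasurable fun x => (F x).trace.re :=
  hF.clm_apply (Complex.reCLM ∘L (LinearMap.toContinuousLinearMap (traceLinearMap ι ℝ ℂ)))

end BoundedMeasurable

/-! ### Noncommutative Khintchine inequality -/

section Khintchine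

variable {ι : Type*} [Fintype ι]

lemma trace_mul_re_nonneg {A B : Matrix ι ι ℂ} (hA : 0 ≤ A) (hB : 0 ≤ B) :
    0 ≤ (A * B).trace.re := by
  classical
  obtain ⟨C, rfl⟩ := CStarAlgebra.nonneg_iff_eq_star_mul_self.1 hB
  rw [← Matrix.mul_assoc, Matrix.trace_mul_comm, ← Matrix.mul_assoc]
  have hconj := (nonneg_iff_posSemidef.1 hA).mul_mul_conjTranspose_same C
  exact (Complex.le_def.1 hconj.trace_nonneg).1

lemma trace_mul_re_le_trace_mul_re {A B P : Matrix ι ι ℂ} (hAB : A ≤ B) (hP : 0 ≤ P) :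
    (A * P).trace.re ≤ (B * P).trace.re := by
  have hdiff := trace_mul_re_nonneg (sub_nonneg.2 hAB) hP
  rwa [sub_mul, trace_sub, Complex.sub_re, sub_nonneg] at hdiff

variable [DecidableEq ι]

/-- The method of exchangeable pairs: `X` and `X ∘ σ` form such a pair. -/
lemma integral_trace_sub_comp_mul_pow_le {Θ : Type*} [MeasurableSpace Θ] {π : Measure Θ}
    [IsFiniteMeasure π] {σ : Θ → Θ} (hσ : MeasurePreserving σ π π) (hinv : σ.Involutive)
    {X : Θ → Matrix ι ι ℂ} (hX : BoundedMeasurable X) (hherm : ∀ x, (X x).IsHermitian) (m : ℕ) :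
    ∫ x, ((X x - X (σ x)) * X x ^ (2 * m + 1)).trace.re ∂π ≤
      (2 * m + 1) / 2 * ∫ x, ((X x - X (σ x)) ^ 2 * X x ^ (2 * m)).trace.re ∂π := by
  have hXσ : BoundedMeasurable fun x => X (σ x) := hX.comp hσ.measurable
  have hΔ := hX.sub hXσ
  have integral_comp_σ {f : Θ → ℝ} (hf : BoundedMeasurable f) : ∫ x, f (σ x) ∂π = ∫ x, f x ∂π := by
    conv_rhs => rw [← hσ.map_eq]
    rw [integral_map hσ.measurable.aemeasurable hf.measurable.aestronglyMeasurable]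
  have hodd := integral_comp_σ (hΔ.mul (hX.pow (2 * m + 1))).trace_re
  have heven := integral_comp_σ ((hΔ.pow 2).mul (hX.pow (2 * m))).trace_re
  have hmono : ∫ x, ((X x - X (σ x)) * X x ^ (2 * m + 1)).trace.re +
        ((X (σ x) - X x) * X (σ x) ^ (2 * m + 1)).trace.re ∂π ≤
      ∫ x, (2 * m + 1) / 2 * (((X x - X (σ x)) ^ 2 * X x ^ (2 * m)).trace.re +
        ((X (σ x) - X x) ^ 2 * X (σ x) ^ (2 * m)).trace.re) ∂π := by
    refine integral_mono
      (((hΔ.mul (hX.pow _)).trace_re.add ((hXσ.sub hX).mul (hXσ.pow _)).trace_re).integrable π)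
      (((((hΔ.pow 2).mul (hX.pow _)).trace_re.add
        (((hXσ.sub hX).pow 2).mul (hXσ.pow _)).trace_re).integrable π).const_mul _) fun x => ?_
    have hmvt := trace_sub_mul_pow_sub_pow_le (hherm x) (hherm (σ x)) m
    rw [mul_sub, mul_add, ← neg_sub (X (σ x)) (X x)] at hmvt
    simp only [neg_sq, neg_mul, sub_neg_eq_add, trace_add, Complex.add_re] at hmvt
    simpa only [← neg_sub (X (σ x)) (X x), neg_mul, neg_sq] using hmvt
  simp only [hinv _] at hodd heven
  rw [integral_const_mul,
    integral_add ((hΔ.mul (hX.pow _)).trace_re.integrable π)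
      (((hXσ.sub hX).mul (hXσ.pow _)).trace_re.integrable π),
    integral_add (((hΔ.pow 2).mul (hX.pow _)).trace_re.integrable π)
      ((((hXσ.sub hX).pow 2).mul (hXσ.pow _)).trace_re.integrable π), hodd, heven] at hmono
  linarith

section SwapAt

variable {I E : Type*} [DecidableEq I]

/-- Exchanges the two members of the `i`-th pair of a family of pairs. -/
def swapAt (i : I) (e : I → E × E) : I → E × E := Function.update e i (e i).swap

lemma swapAt_involutive (i : I) : (swapAt i : (I → E × E) → I → E × E).Involutive := fun e => by
  simp [swapAt]

lemma measurePreserving_swapAt [Fintype I] [MeasurableSpace E] (ν : I → Measure E)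
    [∀ i, SigmaFinite (ν i)] (i : I) :
    MeasurePreserving (swapAt i) (Measure.pi fun j => (ν j).prod (ν j))
      (Measure.pi fun j => (ν j).prod (ν j)) := by
  have hcoord : (swapAt i : (I → E × E) → I → E × E) =
      fun e j => (if j = i then Prod.swap else id) (e j) := by
    ext e j : 2
    by_cases h : j = i
    · subst h; simp [swapAt]
    · simp [swapAt, h]
  rw [hcoord]
  refine measurePreserving_pi (f := fun j => if j = i then Prod.swap else id) _ _ fun j => ?_
  split_ifs
  · exact Measure.measurePreserving_swap
  · exact MeasurePreserving.id _

lemma sum_fst_sub_sum_fst_swapAt [Fintype I] {V : Type*} [AddCommGroup V] (F : I → E → V)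
    (i : I) (e : I → E × E) :
    ∑ j, F j (e j).1 - ∑ j, F j (swapAt i e j).1 = F i (e i).1 - F i (e i).2 := by
  rw [← Finset.sum_sub_distrib, Finset.sum_eq_single i]
  · simp [swapAt]
  · intro j _ hj
    simp [swapAt, hj]
  · simp

end SwapAt

variable {I E : Type*} [Fintype I] [MeasurableSpace E]
  (ν : I → Measure E) [∀ i, IsProbabilityMeasure (ν i)] {F : I → E → Matrix ι ι ℂ}

lemma integral_trace_snd_mul_pow_sum_fst_eq_zero (hF : ∀ i, BoundedMeasurable (F i))
    (hmean : ∀ i, ∫ x, F i x ∂ν i = 0) (k : ℕ) (i : I) :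
    ∫ e, (F i (e i).2 * (∑ j, F j (e j).1) ^ k).trace.re
      ∂(Measure.pi fun j => (ν j).prod (ν j)) = 0 := by
  have hX : BoundedMeasurable fun e : I → E => (∑ j, F j (e j)) ^ k :=
    (BoundedMeasurable.sum fun j => (hF j).comp (measurable_pi_apply j)).pow k
  have hFi : BoundedMeasurable fun e : I → E => F i (e i) := (hF i).comp (measurable_pi_apply i)
  refine ((measurePreserving_arrowProdEquivProdArrow E E I ν ν).integral_comp
    (MeasurableEquiv.arrowProdEquivProdArrow E E I).measurableEmbedding
    (fun q : (I → E) × (I → E) => (F i (q.2 i) * (∑ j, F j (q.1 j)) ^ k).trace.re)).trans ?_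
  rw [integral_prod _
    (((hFi.comp measurable_snd).mul (hX.comp measurable_fst)).trace_re.integrable _)]
  refine integral_eq_zero_of_ae (.of_forall fun x => ?_)
  let L : Matrix ι ι ℂ →L[ℝ] ℝ := Complex.reCLM ∘L (LinearMap.toContinuousLinearMap
    (traceLinearMap ι ℝ ℂ ∘ₗ LinearMap.mulRight ℝ ((∑ j, F j (x j)) ^ k)))
  have hFi_mean : ∫ y : I → E, F i (y i) ∂Measure.pi ν = 0 := by
    have heval := measurePreserving_eval ν i
    rw [← hmean i, ← heval.map_eq, integral_map heval.measurable.aemeasurable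
      (hF i).measurable.aestronglyMeasurable]
  calc ∫ y : I → E, L (F i (y i)) ∂Measure.pi ν = L 0 := by
        rw [L.integral_comp_comm (hFi.integrable _), hFi_mean]
    _ = 0 := map_zero L

lemma integral_trace_pow_succ_sum (hF : ∀ i, BoundedMeasurable (F i))
    (hmean : ∀ i, ∫ x, F i x ∂ν i = 0) (k : ℕ) :
    ∫ e, ((∑ j, F j (e j).1) ^ (k + 1)).trace.re ∂(Measure.pi fun j => (ν j).prod (ν j)) =
      ∑ i, ∫ e, ((F i (e i).1 - F i (e i).2) * (∑ j, F j (e j).1) ^ k).trace.re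
        ∂(Measure.pi fun j => (ν j).prod (ν j)) := by
  have hfst (i : I) : BoundedMeasurable fun e : I → E × E => F i (e i).1 :=
    (hF i).comp (measurable_fst.comp (measurable_pi_apply i))
  have hsnd (i : I) : BoundedMeasurable fun e : I → E × E => F i (e i).2 :=
    (hF i).comp (measurable_snd.comp (measurable_pi_apply i))
  have hpow := (BoundedMeasurable.sum hfst).pow k
  have hterm (i : I) := ((hfst i).mul hpow).trace_re.integrable
    (Measure.pi fun j => (ν j).prod (ν j))
  simp only [sub_mul, trace_sub, Complex.sub_re]
  simp_rw [fun i => integral_sub (hterm i) (((hsnd i).mul hpow).trace_re.integrable _),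
    integral_trace_snd_mul_pow_sum_fst_eq_zero ν hF hmean, sub_zero]
  rw [← integral_finsetSum _ fun i _ => hterm i]
  simp only [← Complex.re_sum, ← trace_sum, ← Finset.sum_mul, ← pow_succ']

lemma integral_trace_pow_sum_step (hF : ∀ i, BoundedMeasurable (F i))
    (hherm : ∀ i x, (F i x).IsHermitian) (hmean : ∀ i, ∫ x, F i x ∂ν i = 0) {v : ℝ}
    (hv : ∀ x y : I → E, ∑ i, (F i (x i) - F i (y i)) ^ 2 ≤ v • 1) (m : ℕ) :
    ∫ e, ((∑ j, F j (e j).1) ^ (2 * m + 2)).trace.re ∂(Measure.pi fun j => (ν j).prod (ν j)) ≤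
      (2 * m + 1) / 2 * (v *
        ∫ e, ((∑ j, F j (e j).1) ^ (2 * m)).trace.re ∂(Measure.pi fun j => (ν j).prod (ν j))) := by
  classical
  set π := Measure.pi fun j => (ν j).prod (ν j)
  have hfst (i : I) : BoundedMeasurable fun e : I → E × E => F i (e i).1 :=
    (hF i).comp (measurable_fst.comp (measurable_pi_apply i))
  have hX := BoundedMeasurable.sum hfst
  have hX_herm (e : I → E × E) : (∑ j, F j (e j).1).IsHermitian :=
    isSelfAdjoint_sum _ fun i _ => hherm i _
  have hsnd (i : I) : BoundedMeasurable fun e : I → E × E => F i (e i).2 :=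
    (hF i).comp (measurable_snd.comp (measurable_pi_apply i))
  have hΔ_sq (i : I) :=
    ((((hfst i).sub (hsnd i)).pow 2).mul (hX.pow (2 * m))).trace_re.integrable π
  have hpair (i : I) := integral_trace_sub_comp_mul_pow_le (measurePreserving_swapAt ν i)
    (swapAt_involutive i) hX hX_herm m
  simp only [sum_fst_sub_sum_fst_swapAt] at hpair
  rw [integral_trace_pow_succ_sum ν hF hmean]
  refine (Finset.sum_le_sum fun i _ => hpair i).trans ?_
  rw [← Finset.mul_sum, ← integral_finsetSum _ fun i _ => hΔ_sq i]
  gcongr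
  rw [← integral_const_mul]
  refine integral_mono (integrable_finsetSum _ fun i _ => hΔ_sq i)
    (((hX.pow _).trace_re.integrable π).const_mul _) fun e => ?_
  have hpos : 0 ≤ (∑ j, F j (e j).1) ^ (2 * m) := by
    rw [pow_mul']
    exact IsSelfAdjoint.sq_nonneg ((hX_herm e).pow m)
  have hle := trace_mul_re_le_trace_mul_re (hv (fun i => (e i).1) fun i => (e i).2) hpos
  simpa [Finset.sum_mul, trace_sum] using hle

lemma integral_trace_pow_sum_le (hF : ∀ i, BoundedMeasurable (F i))
    (hherm : ∀ i x, (F i x).IsHermitian) (hmean : ∀ i, ∫ x, F i x ∂ν i = 0) {v : ℝ} (hv0 : 0 ≤ v)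
    (hv : ∀ x y : I → E, ∑ i, (F i (x i) - F i (y i)) ^ 2 ≤ v • 1) {p m : ℕ} (hm : m ≤ p) :
    ∫ e, ((∑ j, F j (e j).1) ^ (2 * m)).trace.re ∂(Measure.pi fun j => (ν j).prod (ν j)) ≤
      Fintype.card ι * (p * v) ^ m := by
  induction m with
  | zero => simp
  | succ m ih =>
    have hmp : (m : ℝ) + 1 ≤ p := by exact_mod_cast hm
    refine (integral_trace_pow_sum_step ν hF hherm hmean hv m).trans ?_
    calc (2 * m + 1) / 2 * (v * _)
        ≤ (2 * m + 1) / 2 * (v * (Fintype.card ι * (p * v) ^ m)) := by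
          gcongr
          exact ih (by omega)
      _ ≤ p * (v * (Fintype.card ι * (p * v) ^ m)) := by
          gcongr
          linarith
      _ = Fintype.card ι * (p * v) ^ (m + 1) := by ring

end Khintchine

section KhintchineTail

variable {ι : Type*} [Fintype ι]

/-- The Hermitian matrix `[[0, Z], [Zᴴ, 0]]`, whose square is block diagonal with blocks `Z * Zᴴ`
and `Zᴴ * Z`. It is only real linear in `Z`. -/
noncomputable def hermitianDilation : Matrix ι ι ℂ →L[ℝ] Matrix (ι ⊕ ι) (ι ⊕ ι) ℂ :=
  LinearMap.toContinuousLinearMap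
    { toFun := fun Z => fromBlocks 0 Z Zᴴ 0
      map_add' := fun Z Z' => by simp [fromBlocks_add]
      map_smul' := fun c Z => by simp [fromBlocks_smul] }

lemma hermitianDilation_apply (Z : Matrix ι ι ℂ) :
    hermitianDilation Z = fromBlocks 0 Z Zᴴ 0 := rfl

lemma isHermitian_hermitianDilation (Z : Matrix ι ι ℂ) : (hermitianDilation Z).IsHermitian := by
  simp [hermitianDilation_apply, IsHermitian, fromBlocks_conjTranspose]

variable [DecidableEq ι]

lemma sq_hermitianDilation (Z : Matrix ι ι ℂ) :
    hermitianDilation Z ^ 2 = fromBlocks (Z * Zᴴ) 0 0 (Zᴴ * Z) := by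
  simp [hermitianDilation_apply, sq, fromBlocks_multiply]

lemma norm_le_norm_hermitianDilation (Z : Matrix ι ι ℂ) : ‖Z‖ ≤ ‖hermitianDilation Z‖ := by
  have norm_le_one {R : Matrix (ι ⊕ ι) ι ℂ} (hR : Rᴴ * R = 1) : ‖R‖ ≤ 1 := by
    rw [← sq_le_one_iff₀ (norm_nonneg _), sq, ← l2_opNorm_conjTranspose_mul_self, hR]
    rw [← diagonal_one, l2_opNorm_diagonal]
    exact (pi_norm_le_iff_of_nonneg zero_le_one).2 fun _ => norm_one.le
  have hcorner : (fromRows 1 0 : Matrix (ι ⊕ ι) ι ℂ)ᴴ * hermitianDilation Z *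
      (fromRows 0 1 : Matrix (ι ⊕ ι) ι ℂ) = Z := by
    simp [hermitianDilation_apply, conjTranspose_fromRows_eq_fromCols_conjTranspose,
      fromCols_mul_fromBlocks, fromCols_mul_fromRows]
  calc ‖Z‖ ≤ ‖(fromRows 1 0 : Matrix (ι ⊕ ι) ι ℂ)ᴴ‖ * ‖hermitianDilation Z‖ *
        ‖(fromRows 0 1 : Matrix (ι ⊕ ι) ι ℂ)‖ := by
        conv_lhs => rw [← hcorner]
        exact (l2_opNorm_mul _ _).trans (by gcongr; exact l2_opNorm_mul _ _)
    _ ≤ 1 * ‖hermitianDilation Z‖ * 1 := by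
        rw [l2_opNorm_conjTranspose]
        gcongr <;> refine norm_le_one ?_ <;>
          simp [conjTranspose_fromRows_eq_fromCols_conjTranspose, fromCols_mul_fromRows]
    _ = ‖hermitianDilation Z‖ := by ring

lemma sum_sq_hermitianDilation_le {I : Type*} [Fintype I] {Z : I → Matrix ι ι ℂ} {v : ℝ}
    (hrow : ∑ i, Z i * (Z i)ᴴ ≤ v • 1) (hcol : ∑ i, (Z i)ᴴ * Z i ≤ v • 1) :
    ∑ i, hermitianDilation (Z i) ^ 2 ≤ v • 1 := by
  obtain ⟨C, hC⟩ := CStarAlgebra.nonneg_iff_eq_star_mul_self.1 (sub_nonneg.2 hrow)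
  obtain ⟨D, hD⟩ := CStarAlgebra.nonneg_iff_eq_star_mul_self.1 (sub_nonneg.2 hcol)
  have hsum : ∑ i, hermitianDilation (Z i) ^ 2 =
      fromBlocks (∑ i, Z i * (Z i)ᴴ) 0 0 (∑ i, (Z i)ᴴ * Z i) := by
    simp only [sq_hermitianDilation]
    ext (_ | _) (_ | _) <;> simp [Matrix.sum_apply]
  have hsub : v • 1 - ∑ i, hermitianDilation (Z i) ^ 2 =
      fromBlocks (v • 1 - ∑ i, Z i * (Z i)ᴴ) 0 0 (v • 1 - ∑ i, (Z i)ᴴ * Z i) := by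
    rw [hsum, ← fromBlocks_one, fromBlocks_smul, sub_eq_add_neg, fromBlocks_neg, fromBlocks_add]
    simp [sub_eq_add_neg]
  refine sub_nonneg.1 (CStarAlgebra.nonneg_iff_eq_star_mul_self.2 ⟨fromBlocks C 0 0 D, ?_⟩)
  rw [hsub, hC, hD]
  simp [star_eq_conjTranspose, fromBlocks_conjTranspose, fromBlocks_multiply]

variable {I E Ω : Type*} [Fintype I] [MeasurableSpace E] [MeasurableSpace Ω]
  {μ : Measure Ω} {ξ : I → Ω → E} {F : I → E → Matrix ι ι ℂ}

lemma integral_trace_pow_sum_indep_le [IsProbabilityMeasure μ] (hξ_meas : ∀ i, AEMeasurable (ξ i) μ)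
    (hξ : iIndepFun ξ μ) (hF : ∀ i, BoundedMeasurable (F i)) (hherm : ∀ i x, (F i x).IsHermitian)
    (hmean : ∀ i, ∫ ω, F i (ξ i ω) ∂μ = 0) {v : ℝ} (hv0 : 0 ≤ v)
    (hv : ∀ x y : I → E, ∑ i, (F i (x i) - F i (y i)) ^ 2 ≤ v • 1) (p : ℕ) :
    ∫ ω, ((∑ i, F i (ξ i ω)) ^ (2 * p)).trace.re ∂μ ≤ Fintype.card ι * (p * v) ^ p := by
  have hprob (i : I) : IsProbabilityMeasure (μ.map (ξ i)) :=
    Measure.isProbabilityMeasure_map (hξ_meas i)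
  have hmean' (i : I) : ∫ x, F i x ∂μ.map (ξ i) = 0 := by
    rw [integral_map (hξ_meas i) (hF i).measurable.aestronglyMeasurable, hmean]
  have hX : BoundedMeasurable fun e : I → E => (∑ i, F i (e i)) ^ (2 * p) :=
    (BoundedMeasurable.sum fun i => (hF i).comp (measurable_pi_apply i)).pow _
  have hfst : MeasurePreserving (fun (e : I → E × E) i => (e i).1)
      (Measure.pi fun i => (μ.map (ξ i)).prod (μ.map (ξ i))) (Measure.pi fun i => μ.map (ξ i)) :=
    measurePreserving_pi (f := fun _ => Prod.fst) _ _ fun _ => measurePreserving_fst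
  refine le_of_eq_of_le ?_ (integral_trace_pow_sum_le _ hF hherm hmean' hv0 hv le_rfl)
  rw [← integral_map (aemeasurable_pi_lambda _ hξ_meas)
      (f := fun e : I → E => ((∑ i, F i (e i)) ^ (2 * p)).trace.re)
      hX.trace_re.measurable.aestronglyMeasurable, (iIndepFun_iff_map_fun_eq_pi_map hξ_meas).1 hξ,
    ← hfst.map_eq, integral_map hfst.measurable.aemeasurable
      hX.trace_re.measurable.aestronglyMeasurable]

/-- Markov's inequality for the `2p`-th moment of the dilation of `∑ i, F i (ξ i)`. -/
theorem measureReal_lt_norm_sq_sum_le [IsProbabilityMeasure μ]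
    (hξ_meas : ∀ i, AEMeasurable (ξ i) μ) (hξ : iIndepFun ξ μ) (hF : ∀ i, BoundedMeasurable (F i))
    (hmean : ∀ i, ∫ ω, F i (ξ i ω) ∂μ = 0) {v : ℝ} (hv0 : 0 < v)
    (hrow : ∀ x y : I → E, ∑ i, (F i (x i) - F i (y i)) * (F i (x i) - F i (y i))ᴴ ≤ v • 1)
    (hcol : ∀ x y : I → E, ∑ i, (F i (x i) - F i (y i))ᴴ * (F i (x i) - F i (y i)) ≤ v • 1)
    {p : ℕ} (hp : p ≠ 0) {a : ℝ} (ha : 0 < a) :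
    μ.real {ω | a * (p * v) < ‖∑ i, F i (ξ i ω)‖ ^ 2} ≤ 2 * Fintype.card ι / a ^ p := by
  have hdil (i : I) : BoundedMeasurable fun x => hermitianDilation (F i x) := (hF i).clm_apply _
  have hdil_mean (i : I) : ∫ ω, hermitianDilation (F i (ξ i ω)) ∂μ = 0 := by
    have hint : Integrable (fun ω => F i (ξ i ω)) μ :=
      ((hF i).integrable (μ.map (ξ i))).comp_aemeasurable (hξ_meas i)
    rw [ContinuousLinearMap.integral_comp_comm _ hint, hmean, map_zero]
  have hmoment := integral_trace_pow_sum_indep_le hξ_meas hξ hdil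
    (fun _ _ => isHermitian_hermitianDilation _) hdil_mean hv0.le (fun x y => by
      simpa only [← map_sub] using sum_sq_hermitianDilation_le (hrow x y) (hcol x y)) p
  simp only [← map_sum, Fintype.card_sum, ← two_mul, Nat.cast_mul, Nat.cast_ofNat] at hmoment
  have hnorm_le (ω : Ω) : ‖∑ i, F i (ξ i ω)‖ ^ (2 * p) ≤
      (hermitianDilation (∑ i, F i (ξ i ω)) ^ (2 * p)).trace.re :=
    (by gcongr; exact norm_le_norm_hermitianDilation _ : _ ≤ _).trans
      (norm_pow_le_trace_pow (isHermitian_hermitianDilation _) hp)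
  have hint :
      Integrable (fun ω => (hermitianDilation (∑ i, F i (ξ i ω)) ^ (2 * p)).trace.re) μ := by
    have hX : BoundedMeasurable fun e : I → E => ∑ i, F i (e i) :=
      .sum fun i => (hF i).comp (measurable_pi_apply i)
    exact (((hX.clm_apply hermitianDilation).pow (2 * p)).trace_re.integrable
      (μ.map fun ω i => ξ i ω)).comp_aemeasurable (aemeasurable_pi_lambda _ hξ_meas)
  have hmarkov := mul_meas_ge_le_integral_of_nonneg
    (.of_forall fun ω => (pow_nonneg (norm_nonneg _) _).trans (hnorm_le ω)) hint ((a * (p * v)) ^ p)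
  have : (0 : ℝ) < p := by exact_mod_cast hp.pos
  calc μ.real {ω | a * (p * v) < ‖∑ i, F i (ξ i ω)‖ ^ 2}
      ≤ μ.real {ω | (a * (p * v)) ^ p ≤
          (hermitianDilation (∑ i, F i (ξ i ω)) ^ (2 * p)).trace.re} := by
        refine measureReal_mono fun ω (hω : a * (p * v) < _) => le_trans ?_ (hnorm_le ω)
        rw [pow_mul]
        gcongr
    _ ≤ (2 * Fintype.card ι * (p * v) ^ p) / (a * (p * v)) ^ p := by
        rw [le_div_iff₀' (by positivity)]
        exact hmarkov.trans hmoment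
    _ = 2 * Fintype.card ι / a ^ p := by
        rw [mul_pow a, mul_div_mul_right _ _ (by positivity)]

end KhintchineTail

/-! ### Positive maps and their spectral radius -/

lemma exists_norm_pow_le_of_spectralRadius_lt {A : Type*} [NormedRing A] [NormedAlgebra ℂ A]
    [CompleteSpace A] {a : A} {r : NNReal} (hr : spectralRadius ℂ a < r) :
    ∃ k ≠ 0, ‖a ^ k‖ ≤ r ^ k := by
  have hev := (spectrum.pow_nnnorm_pow_one_div_tendsto_nhds_spectralRadius a).eventually
    (gt_mem_nhds hr)
  obtain ⟨k, hlt, hk⟩ := (hev.and (Filter.eventually_ge_atTop 1)).exists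
  have hk0 : (0 : ℝ) < k := by exact_mod_cast hk
  refine ⟨k, by lia, ?_⟩
  have hle := (ENNReal.rpow_inv_le_iff hk0).1 (one_div (k : ℝ) ▸ hlt.le)
  rw [ENNReal.rpow_natCast] at hle
  exact_mod_cast hle

section PositiveMap

variable {A : Type*} [CStarAlgebra A] [PartialOrder A] [StarOrderedRing A] [Nontrivial A]

/-- The supersolution is a truncated Neumann series `∑ j < k, r⁻ʲ Φʲ(1)` with `‖Φᵏ‖ ≤ rᵏ`. -/
theorem exists_one_le_map_le_smul (Φ : A →L[ℂ] A) (hΦ : ∀ x, 0 ≤ x → 0 ≤ Φ x) {r : NNReal}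
    (hr : spectralRadius ℂ Φ < r) : ∃ x, 1 ≤ x ∧ Φ x ≤ (r : ℝ) • x := by
  have hr0 : (0 : ℝ) < r := by exact_mod_cast pos_of_gt hr
  obtain ⟨k, hk, hnorm⟩ := exists_norm_pow_le_of_spectralRadius_lt hr
  let b : ℕ → A := fun j => ((r : ℝ) ^ j)⁻¹ • (Φ ^ j) 1
  have hb_nonneg (j : ℕ) : 0 ≤ b j := by
    have hpow : 0 ≤ (Φ ^ j) 1 := by
      induction j with
      | zero => exact zero_le_one
      | succ j ih => rw [pow_succ']; exact hΦ _ ih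
    exact smul_nonneg (by positivity) hpow
  have hb_zero : b 0 = 1 := by simp [b]
  have hb_succ (j : ℕ) : Φ (b j) = (r : ℝ) • b (j + 1) := by
    simp only [b, pow_succ', smul_smul, Φ.map_smul_of_tower, mul_apply_eq_comp]
    congr 1
    field_simp
  have hb_last : b k ≤ 1 := by
    have hle : (Φ ^ k) 1 ≤ algebraMap ℝ A ((r : ℝ) ^ k) := by
      refine (CStarAlgebra.norm_le_iff_le_algebraMap _ (by positivity) ?_).1 ?_
      · simpa [b, hr0.ne'] using smul_nonneg (by positivity : (0 : ℝ) ≤ r ^ k) (hb_nonneg k)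
      · simpa using ((Φ ^ k).le_opNorm 1).trans (mul_le_mul_of_nonneg_right hnorm (norm_nonneg _))
    refine (smul_le_smul_of_nonneg_left hle (by positivity)).trans_eq ?_
    rw [Algebra.algebraMap_eq_smul_one, smul_smul, inv_mul_cancel₀ (by positivity), one_smul]
  refine ⟨∑ j ∈ Finset.range k, b j, ?_, ?_⟩
  · rw [← hb_zero]
    exact Finset.single_le_sum (fun j _ => hb_nonneg j) (Finset.mem_range.2 hk.pos)
  · have htelescope : (r : ℝ) • ∑ j ∈ Finset.range k, b j - Φ (∑ j ∈ Finset.range k, b j) =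
        (r : ℝ) • (1 - b k) := by
      rw [map_sum, ← hb_zero, ← Finset.sum_range_sub', Finset.sum_sub_distrib, smul_sub,
        Finset.smul_sum (f := fun j => b (j + 1))]
      simp only [hb_succ]
    exact sub_nonneg.1 (htelescope ▸ smul_nonneg hr0.le (sub_nonneg.2 hb_last))

end PositiveMap

section KrausMap

variable {S ι : Type*} [Fintype S] [Fintype ι]

/-- The completely positive map `X ↦ |S|⁻¹ ∑ s, w s * X * (w s)ᴴ` with Kraus operators
`|S|^(-1/2) w s`. -/
noncomputable def krausMap (w : S → Matrix ι ι ℂ) : Matrix ι ι ℂ →ₗ[ℂ] Matrix ι ι ℂ :=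
  (Fintype.card S : ℂ)⁻¹ • ∑ s, LinearMap.mulLeft ℂ (w s) ∘ₗ LinearMap.mulRight ℂ (w s)ᴴ

/-- The matrix of `krausMap w` in the basis of matrix units; it acts on vectors of the form
`vec Xᵀ` because `Matrix.vec` stacks columns. -/
noncomputable def krausMatrix (w : S → Matrix ι ι ℂ) : Matrix (ι × ι) (ι × ι) ℂ :=
  (Fintype.card S : ℂ)⁻¹ • ∑ s, w s ⊗ₖ (w s).map (starRingEnd ℂ)

lemma krausMap_apply (w : S → Matrix ι ι ℂ) (X : Matrix ι ι ℂ) :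
    krausMap w X = (Fintype.card S : ℂ)⁻¹ • ∑ s, w s * X * (w s)ᴴ := by
  simp [krausMap, Matrix.mul_assoc]

lemma krausMatrix_mulVec_vec (w : S → Matrix ι ι ℂ) (X : Matrix ι ι ℂ) :
    krausMatrix w *ᵥ vec Xᵀ = vec (krausMap w X)ᵀ := by
  have hconj (s : S) : (w s).map (starRingEnd ℂ) = (w s)ᴴᵀ := rfl
  simp only [krausMatrix, krausMap_apply, smul_mulVec, Matrix.sum_mulVec, kronecker_mulVec_vec,
    transpose_smul, transpose_sum, vec_smul, vec_sum, transpose_mul, hconj, Matrix.mul_assoc]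

lemma krausMap_nonneg (w : S → Matrix ι ι ℂ) {X : Matrix ι ι ℂ} (hX : 0 ≤ X) :
    0 ≤ krausMap w X := by
  classical
  rw [krausMap_apply]
  refine smul_nonneg (by positivity) (Finset.sum_nonneg fun s _ => ?_)
  exact star_right_conjugate_nonneg hX _

lemma krausMap_mono (w : S → Matrix ι ι ℂ) {X Y : Matrix ι ι ℂ} (hXY : X ≤ Y) :
    krausMap w X ≤ krausMap w Y := by
  have hnonneg := krausMap_nonneg w (sub_nonneg.2 hXY)
  rwa [map_sub, sub_nonneg] at hnonneg

lemma mem_roots_charpoly_krausMatrix [DecidableEq ι] {w : S → Matrix ι ι ℂ} {z : ℂ}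
    (hz : z ∈ spectrum ℂ (krausMap w)) : z ∈ (krausMatrix w).charpoly.roots := by
  obtain ⟨X, hX, hX0⟩ := (Module.End.hasEigenvalue_iff_mem_spectrum.2 hz).exists_hasEigenvector
  rw [Module.End.mem_eigenspace_iff] at hX
  rw [Polynomial.mem_roots (charpoly_monic _).ne_zero, ← mem_spectrum_iff_isRoot_charpoly,
    ← Matrix.spectrum_toLin', ← Module.End.hasEigenvalue_iff_mem_spectrum]
  refine Module.End.hasEigenvalue_of_hasEigenvector (x := vec Xᵀ) ⟨?_, by simpa using hX0⟩
  rw [Module.End.mem_eigenspace_iff, toLin'_apply, krausMatrix_mulVec_vec, hX, transpose_smul,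
    vec_smul]

lemma exists_posDef_krausMap_le [DecidableEq ι] [Nonempty ι] {w : S → Matrix ι ι ℂ} {r : ℝ}
    (hr0 : 0 ≤ r) (hr : ∀ z ∈ (krausMatrix w).charpoly.roots, ‖z‖ < r) :
    ∃ X : Matrix ι ι ℂ, X.PosDef ∧ krausMap w X ≤ r • X := by
  lift r to NNReal using hr0
  let Φ := Module.End.toContinuousLinearMap (Matrix ι ι ℂ) (krausMap w)
  have hΦ_radius : spectralRadius ℂ Φ < r := by
    refine spectrum.spectralRadius_lt_of_forall_lt _ fun z hz => ?_
    rw [AlgEquiv.spectrum_eq] at hz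
    exact hr z (mem_roots_charpoly_krausMatrix hz)
  obtain ⟨X, hX1, hX⟩ := exists_one_le_map_le_smul Φ (fun _ => krausMap_nonneg w) hΦ_radius
  refine ⟨X, ?_, hX⟩
  simpa using PosDef.one.add_posSemidef (Matrix.le_iff.1 hX1)

end KrausMap

/-! ### A deterministic lower bound for the spectral radius -/

section CayleySq

/-- The Cayley transform `(x² - 1) / (x² + 1)` of the square. The substitution `f = cayleySq x`
turns a supersolution `x` into a pair of test functions `1 - f` and `1 + f`. -/
noncomputable def cayleySq (x : ℝ) : ℝ := (x ^ 2 - 1) / (x ^ 2 + 1)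

@[fun_prop]
lemma continuous_cayleySq : Continuous cayleySq := by
  unfold cayleySq
  fun_prop (disch := intro; positivity)

lemma abs_cayleySq_le_one (x : ℝ) : |cayleySq x| ≤ 1 := by
  rw [cayleySq, abs_div, abs_of_pos (by positivity : 0 < x ^ 2 + 1), div_le_one (by positivity)]
  exact abs_le.2 ⟨by nlinarith, by linarith⟩

lemma one_add_cayleySq_le {x : ℝ} (hx : 0 ≤ x) : 1 + cayleySq x ≤ x := by
  have heq : x - (1 + cayleySq x) = x * (x - 1) ^ 2 / (x ^ 2 + 1) := by
    rw [cayleySq]; field_simp; ring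
  rw [← sub_nonneg, heq]
  positivity

lemma one_sub_cayleySq_mul_le (x : ℝ) : (1 - cayleySq x) * x ≤ 1 - cayleySq x ^ 2 / 2 := by
  have heq : 1 - cayleySq x ^ 2 / 2 - (1 - cayleySq x) * x =
      ((x - 1) ^ 2 / (x ^ 2 + 1)) ^ 2 / 2 := by
    rw [cayleySq]; field_simp; ring
  rw [← sub_nonneg, heq]
  positivity

lemma exists_pos_sum_cayleySq_eq_zero {ι : Type*} [Fintype ι] {x : ι → ℝ} (hx : ∀ i, 0 < x i) :
    ∃ t > 0, ∑ i, cayleySq (t * x i) = 0 := by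
  rcases isEmpty_or_nonempty ι with _ | _
  · exact ⟨1, one_pos, by simp⟩
  have hsum_pos : 0 < ∑ i, x i := Finset.sum_pos (fun i _ => hx i) Finset.univ_nonempty
  have hsum_inv_pos : 0 < ∑ i, (x i)⁻¹ :=
    Finset.sum_pos (fun i _ => inv_pos.2 (hx i)) Finset.univ_nonempty
  have hlow : ∑ i, cayleySq ((∑ i, x i)⁻¹ * x i) ≤ 0 := by
    refine Finset.sum_nonpos fun i _ => div_nonpos_of_nonpos_of_nonneg ?_ (by positivity)
    have hle : (∑ i, x i)⁻¹ * x i ≤ 1 := by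
      rw [inv_mul_le_one₀ hsum_pos]
      exact Finset.single_le_sum (fun i _ => (hx i).le) (Finset.mem_univ i)
    nlinarith [mul_pos (inv_pos.2 hsum_pos) (hx i)]
  have hhigh : 0 ≤ ∑ i, cayleySq ((∑ i, (x i)⁻¹) * x i) := by
    refine Finset.sum_nonneg fun i _ => div_nonneg ?_ (by positivity)
    have hle : 1 ≤ (∑ i, (x i)⁻¹) * x i := by
      rw [← div_le_iff₀ (hx i), one_div]
      exact Finset.single_le_sum (fun i _ => (inv_pos.2 (hx i)).le) (Finset.mem_univ i)
    nlinarith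
  have hcont : Continuous fun t => ∑ i, cayleySq (t * x i) :=
    continuous_finsetSum _ fun i _ => continuous_cayleySq.comp (by fun_prop)
  obtain ⟨t, ht, ht0⟩ := isPreconnected_Ioi.intermediate_value₂ (inv_pos.2 hsum_pos) hsum_inv_pos
    hcont.continuousOn continuousOn_const hlow hhigh
  exact ⟨t, ht, ht0⟩

end CayleySq

section TestMatrix

variable {S ι : Type*} [Fintype S] [Fintype ι] [DecidableEq ι]

lemma trace_cfc {X : Matrix ι ι ℂ} (hX : X.IsHermitian) (f : ℝ → ℝ) :
    (cfc f X).trace = ∑ i, (f (hX.eigenvalues i) : ℂ) := by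
  rw [hX.cfc_eq, IsHermitian.cfc, Unitary.conjStarAlgAut_apply, trace_mul_cycle,
    Unitary.coe_star_mul_self, Matrix.one_mul, trace_diagonal]
  rfl

lemma exists_pos_trace_cfc_smul_eq_zero {X : Matrix ι ι ℂ} (hX : X.PosDef) :
    ∃ t : ℝ, 0 < t ∧ (cfc cayleySq (t • X)).trace = 0 := by
  obtain ⟨t, ht, hsum⟩ := exists_pos_sum_cayleySq_eq_zero hX.eigenvalues_pos
  refine ⟨t, ht, ?_⟩
  have hsa : IsSelfAdjoint X := hX.isHermitian
  rw [← cfc_comp_smul t cayleySq X, trace_cfc hX.isHermitian]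
  exact_mod_cast hsum

lemma trace_one_sub_cfc_cayleySq_mul_re_le {X : Matrix ι ι ℂ} (hX : X.IsHermitian) :
    ((1 - cfc cayleySq X) * X).trace.re ≤
      Fintype.card ι - (cfc cayleySq X * cfc cayleySq X).trace.re / 2 := by
  have hsa : IsSelfAdjoint X := hX
  have hcfc : (1 - cfc cayleySq X) * X = cfc (fun x => (1 - cayleySq x) * x) X := by
    rw [cfc_mul (fun x => 1 - cayleySq x) (fun x => x) X, cfc_id' ℝ X,
      cfc_sub (fun _ => 1) cayleySq X, cfc_const_one ℝ X]
  rw [hcfc, ← cfc_mul cayleySq cayleySq X, trace_cfc hX, trace_cfc hX]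
  simp only [← Complex.ofReal_sum, Complex.ofReal_re]
  calc ∑ i, (1 - cayleySq (hX.eigenvalues i)) * hX.eigenvalues i
      ≤ ∑ i, (1 - cayleySq (hX.eigenvalues i) ^ 2 / 2) :=
        Finset.sum_le_sum fun i _ => one_sub_cayleySq_mul_le _
    _ = Fintype.card ι - (∑ i, cayleySq (hX.eigenvalues i) * cayleySq (hX.eigenvalues i)) / 2 := by
        simp [Finset.sum_sub_distrib, Finset.sum_div, sq]

/-- The test matrix `F` is `cayleySq` of a supersolution, rescaled so that `F` is traceless. -/
lemma exists_traceless_trace_krausMap_le [Nonempty ι] {w : S → Matrix ι ι ℂ} {r : ℝ} (hr0 : 0 ≤ r)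
    (hr : ∀ z ∈ (krausMatrix w).charpoly.roots, ‖z‖ < r) :
    ∃ F : Matrix ι ι ℂ, F.IsHermitian ∧ F.trace = 0 ∧ -1 ≤ F ∧ F ≤ 1 ∧
      ((1 - F) * krausMap w (1 + F)).trace.re ≤
        r * (Fintype.card ι - (F * F).trace.re / 2) := by
  obtain ⟨X₀, hX₀, hsuper₀⟩ := exists_posDef_krausMap_le hr0 hr
  obtain ⟨t, ht, htrace⟩ := exists_pos_trace_cfc_smul_eq_zero hX₀
  have hX : (t • X₀).PosDef := hX₀.smul ht
  have hsuper : krausMap w (t • X₀) ≤ r • t • X₀ := by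
    rw [LinearMap.map_smul_of_tower, smul_comm]
    exact smul_le_smul_of_nonneg_left hsuper₀ ht.le
  generalize t • X₀ = X at hX hsuper htrace
  have hsa : IsSelfAdjoint X := hX.isHermitian
  have hspec {x : ℝ} (hx : x ∈ spectrum ℝ X) : 0 ≤ x :=
    spectrum_nonneg_of_nonneg hX.posSemidef.nonneg hx
  have hF_le : cfc cayleySq X ≤ 1 :=
    cfc_le_one _ _ fun x _ => (abs_le.1 (abs_cayleySq_le_one x)).2
  have hadd_le : 1 + cfc cayleySq X ≤ X := by
    calc 1 + cfc cayleySq X = cfc (fun x => 1 + cayleySq x) X := by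
          rw [cfc_const_add 1 cayleySq X, map_one]
      _ ≤ cfc (fun x => x) X := cfc_mono fun x hx => one_add_cayleySq_le (hspec hx)
      _ = X := cfc_id' ℝ X
  refine ⟨cfc cayleySq X, cfc_predicate cayleySq X, htrace, ?_, hF_le, ?_⟩
  · simpa using algebraMap_le_cfc cayleySq (-1) X fun x _ => (abs_le.1 (abs_cayleySq_le_one x)).1
  · calc ((1 - cfc cayleySq X) * krausMap w (1 + cfc cayleySq X)).trace.re
        ≤ ((1 - cfc cayleySq X) * r • X).trace.re := by
          rw [trace_mul_comm, trace_mul_comm _ (r • X)]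
          exact trace_mul_re_le_trace_mul_re ((krausMap_mono w hadd_le).trans hsuper)
            (sub_nonneg.2 hF_le)
      _ = r * ((1 - cfc cayleySq X) * X).trace.re := by simp
      _ ≤ _ := by gcongr; exact trace_one_sub_cfc_cayleySq_mul_re_le hX.isHermitian

end TestMatrix

section Perturbation

variable {S ι : Type*} [Fintype S] [Fintype ι]

lemma smul_krausMap_sub_smul_krausMap_le (a b : S → Matrix ι ι ℂ) {q : ℝ} (hq : 0 < q)
    {Z : Matrix ι ι ℂ} (hZ : 0 ≤ Z) :
    (1 - q⁻¹) • krausMap a Z - (q - 1) • krausMap b Z ≤ krausMap (fun s => a s + b s) Z := by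
  have hdiff : krausMap (fun s => a s + b s) Z - ((1 - q⁻¹) • krausMap a Z -
      (q - 1) • krausMap b Z) = q⁻¹ • krausMap (fun s => a s + q • b s) Z := by
    simp only [krausMap_apply, Matrix.mul_add, Matrix.add_mul, conjTranspose_add,
      conjTranspose_smul, star_trivial, Matrix.smul_mul, Matrix.mul_smul, smul_add,
      Finset.sum_add_distrib, ← Finset.smul_sum]
    match_scalars <;> field_simp <;> ring
  exact sub_nonneg.1 (hdiff ▸ smul_nonneg (by positivity) (krausMap_nonneg _ hZ))

lemma trace_krausMap_one_re [DecidableEq ι] (w : S → Matrix ι ι ℂ) :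
    (krausMap w 1).trace.re = (Fintype.card S : ℝ)⁻¹ * ∑ s, ∑ i, ∑ j, ‖w s i j‖ ^ 2 := by
  have hcard : (Fintype.card S : ℂ)⁻¹ = ((Fintype.card S : ℝ)⁻¹ : ℝ) := by push_cast; rfl
  have hnorm (s : S) (i : ι) (j : ι) : w s i j * star (w s i j) = ((‖w s i j‖ ^ 2 : ℝ) : ℂ) := by
    rw [Complex.ofReal_pow]
    exact Complex.mul_conj' _
  simp only [krausMap_apply, Matrix.mul_one, trace_smul, trace_sum, smul_eq_mul, hcard,
    Complex.re_ofReal_mul]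
  simp only [Matrix.trace, Matrix.diag_apply, Matrix.mul_apply, conjTranspose_apply, hnorm,
    ← Complex.ofReal_sum, Complex.ofReal_re]

variable [DecidableEq ι]

lemma trace_mul_krausMap_re_le (b : S → Matrix ι ι ℂ) {c : ℝ} (hc : 0 ≤ c) {P Z : Matrix ι ι ℂ}
    (hP : P ≤ c • 1) (hZ0 : 0 ≤ Z) (hZ : Z ≤ c • 1) :
    (P * krausMap b Z).trace.re ≤ c ^ 2 * (krausMap b 1).trace.re := by
  calc (P * krausMap b Z).trace.re ≤ ((c • 1 : Matrix ι ι ℂ) * krausMap b Z).trace.re :=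
        trace_mul_re_le_trace_mul_re hP (krausMap_nonneg b hZ0)
    _ = c * (krausMap b Z * 1).trace.re := by simp
    _ ≤ c * (krausMap b (c • 1) * 1).trace.re :=
        mul_le_mul_of_nonneg_left
          (trace_mul_re_le_trace_mul_re (krausMap_mono b hZ) zero_le_one) hc
    _ = c ^ 2 * (krausMap b 1).trace.re := by
        simp [LinearMap.map_smul_of_tower, sq, mul_assoc]

end Perturbation

section SpectralGap

variable {S ι : Type*} [Fintype S] [Fintype ι]

lemma norm_star_dotProduct_mulVec_le [DecidableEq ι] (N : Matrix ι ι ℂ) (x y : ι → ℂ) :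
    ‖star x ⬝ᵥ N *ᵥ y‖ ≤ ‖N‖ * (‖WithLp.toLp 2 x‖ * ‖WithLp.toLp 2 y‖) := by
  have hinner : star x ⬝ᵥ N *ᵥ y = inner ℂ (WithLp.toLp 2 x) (WithLp.toLp 2 (N *ᵥ y)) := by
    rw [EuclideanSpace.inner_toLp_toLp, dotProduct_comm]
  calc ‖star x ⬝ᵥ N *ᵥ y‖ ≤ ‖WithLp.toLp 2 x‖ * ‖WithLp.toLp 2 (N *ᵥ y)‖ :=
        hinner ▸ norm_inner_le_norm _ _
    _ ≤ ‖WithLp.toLp 2 x‖ * (‖N‖ * ‖WithLp.toLp 2 y‖) := by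
        gcongr
        exact l2_opNorm_mulVec N (WithLp.toLp 2 y)
    _ = _ := by ring

variable (ι) in
/-- The orthogonal projection onto the span of `vec 1`, the maximally entangled vector. -/
noncomputable def entangledProj [DecidableEq ι] : Matrix (ι × ι) (ι × ι) ℂ :=
  (Fintype.card ι : ℂ)⁻¹ • vecMulVec (vec 1) (vec 1)

lemma star_vec_dotProduct_entangledProj_mulVec [DecidableEq ι] (P Z : Matrix ι ι ℂ) :
    star (vec Pᵀ) ⬝ᵥ entangledProj ι *ᵥ vec Zᵀ =
      (Fintype.card ι : ℂ)⁻¹ * (star P.trace * Z.trace) := by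
  have hP : star (vec Pᵀ) ⬝ᵥ vec (1 : Matrix ι ι ℂ) = star P.trace := by
    rw [star_vec_dotProduct_vec, Matrix.mul_one, trace_conjTranspose, trace_transpose]
  have hZ : vec (1 : Matrix ι ι ℂ) ⬝ᵥ vec Zᵀ = Z.trace := by
    rw [vec_dotProduct_vec, transpose_one, Matrix.one_mul, trace_transpose]
  rw [entangledProj, smul_mulVec, dotProduct_smul, vecMulVec_mulVec, dotProduct_smul, hP, hZ]
  rfl

lemma star_vec_dotProduct_krausMatrix_mulVec (w : S → Matrix ι ι ℂ) (P Z : Matrix ι ι ℂ) :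
    star (vec Pᵀ) ⬝ᵥ krausMatrix w *ᵥ vec Zᵀ = (Pᴴ * krausMap w Z).trace := by
  rw [krausMatrix_mulVec_vec, star_vec_dotProduct_vec, ← trace_transpose, transpose_mul,
    transpose_transpose, trace_mul_comm]
  rfl

lemma norm_toLp_vec_transpose (P : Matrix ι ι ℂ) :
    ‖WithLp.toLp 2 (vec Pᵀ)‖ = √(Pᴴ * P).trace.re := by
  rw [EuclideanSpace.norm_eq, Fintype.sum_prod_type, Finset.sum_comm]
  simp [Matrix.trace, Matrix.mul_apply, Complex.sq_norm, Complex.normSq_apply]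

lemma norm_trace_mul_krausMap_le [DecidableEq ι] {a : S → Matrix ι ι ℂ} {ε : ℝ}
    (hgap : ‖krausMatrix a - entangledProj ι‖ ≤ ε) {P Z : Matrix ι ι ℂ}
    (htrace : P.trace = 0 ∨ Z.trace = 0) :
    ‖(Pᴴ * krausMap a Z).trace‖ ≤ ε * (√(Pᴴ * P).trace.re * √(Zᴴ * Z).trace.re) := by
  have hproj : star (vec Pᵀ) ⬝ᵥ entangledProj ι *ᵥ vec Zᵀ = 0 := by
    rw [star_vec_dotProduct_entangledProj_mulVec]
    rcases htrace with h | h <;> simp [h]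
  have hsub : (Pᴴ * krausMap a Z).trace =
      star (vec Pᵀ) ⬝ᵥ (krausMatrix a - entangledProj ι) *ᵥ vec Zᵀ := by
    rw [sub_mulVec, dotProduct_sub, hproj, sub_zero, star_vec_dotProduct_krausMatrix_mulVec]
  rw [hsub, ← norm_toLp_vec_transpose, ← norm_toLp_vec_transpose]
  exact (norm_star_dotProduct_mulVec_le _ _ _).trans (by gcongr)

lemma trace_mul_self_re_nonneg {F : Matrix ι ι ℂ} (hF : F.IsHermitian) :
    0 ≤ (F * F).trace.re := by
  have hnonneg := (posSemidef_self_mul_conjTranspose F).trace_nonneg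
  rw [hF.eq] at hnonneg
  exact (Complex.le_def.1 hnonneg).1

lemma le_trace_one_sub_mul_krausMap_one_add [DecidableEq ι] {a : S → Matrix ι ι ℂ} {ε : ℝ}
    (hgap : ‖krausMatrix a - entangledProj ι‖ ≤ ε) {F : Matrix ι ι ℂ} (hF : F.IsHermitian)
    (htrace : F.trace = 0) :
    (krausMap a 1).trace.re - 2 * ε * √(Fintype.card ι) * √(F * F).trace.re -
        ε * (F * F).trace.re ≤ ((1 - F) * krausMap a (1 + F)).trace.re := by
  have h1F := norm_trace_mul_krausMap_le hgap (P := 1) (Z := F) (.inr htrace)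
  have hF1 := norm_trace_mul_krausMap_le hgap (P := F) (Z := 1) (.inl htrace)
  have hFF := norm_trace_mul_krausMap_le hgap (P := F) (Z := F) (.inl htrace)
  simp only [conjTranspose_one, Matrix.one_mul, Matrix.mul_one, hF.eq, trace_one,
    Complex.natCast_re, Real.mul_self_sqrt (trace_mul_self_re_nonneg hF)] at h1F hF1 hFF
  have hexpand : ((1 - F) * krausMap a (1 + F)).trace = (krausMap a 1).trace +
      (krausMap a F).trace - (F * krausMap a 1).trace - (F * krausMap a F).trace := by
    simp only [map_add, sub_mul, mul_add, one_mul, trace_sub, trace_add]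
    ring
  rw [hexpand]
  simp only [Complex.add_re, Complex.sub_re]
  have := (abs_le.1 ((Complex.abs_re_le_norm _).trans h1F)).1
  have := (Complex.re_le_norm _).trans hF1
  have := (Complex.re_le_norm _).trans hFF
  linarith

end SpectralGap

section Deterministic

variable {S ι : Type*} [Fintype S] [Fintype ι] [DecidableEq ι] [Nonempty ι]

lemma one_sub_le_of_perturbed_quadratic_bound {N L u v f ε γ β q r : ℝ} (hN : 0 < N) (hf : 0 ≤ f)
    (hε : ε ≤ 1 / 8) (hγ : 0 ≤ γ) (hβ : 0 ≤ β) (hq : 1 ≤ q) (hr : 1 / 2 ≤ r)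
    (hL : N * (1 - γ) ≤ L) (hu : L - 2 * ε * √N * √f - ε * f ≤ u)
    (hv : v ≤ 2 ^ 2 * (β / q ^ 2 * N))
    (huv : (1 - q⁻¹) * u - (q - 1) * v ≤ r * (N - f / 2)) :
    1 - (γ + 8 * ε ^ 2 + (1 + 4 * β) / q) ≤ r := by
  have : 0 < q := by linarith
  have hq_inv : q⁻¹ ≤ 1 := inv_le_one_of_one_le₀ hq
  have hcross : 2 * ε * √N * √f ≤ 8 * ε ^ 2 * N + f / 8 := by
    nlinarith [sq_nonneg (8 * ε * √N - √f), Real.sq_sqrt hN.le, Real.sq_sqrt hf]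
  have hu' : N * (1 - (γ + 8 * ε ^ 2)) - f / 4 ≤ u := by
    linarith [mul_le_mul_of_nonneg_right hε hf]
  have hqu : N * (1 - (γ + 8 * ε ^ 2)) - N / q - f / 4 ≤ (1 - q⁻¹) * u := by
    have hmul := mul_le_mul_of_nonneg_left hu' (sub_nonneg.2 hq_inv)
    have hdrop : 0 ≤ q⁻¹ * (N * (γ + 8 * ε ^ 2) + f / 4) := by positivity
    rw [div_eq_mul_inv]
    linarith
  have hqv : (q - 1) * v ≤ 4 * β * N / q := by
    calc (q - 1) * v ≤ (q - 1) * (2 ^ 2 * (β / q ^ 2 * N)) := by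
          gcongr
      _ ≤ q * (2 ^ 2 * (β / q ^ 2 * N)) := by gcongr; linarith
      _ = 4 * β * N / q := by field_simp; ring
  have hrf : f / 4 ≤ r * (f / 2) := by nlinarith
  have hfinal : N * (1 - (γ + 8 * ε ^ 2 + (1 + 4 * β) / q)) ≤ N * r := by
    have hsplit : N * ((1 + 4 * β) / q) = N / q + 4 * β * N / q := by ring
    linarith
  exact le_of_mul_le_mul_left hfinal hN

lemma le_of_forall_root_charpoly_krausMatrix_norm_lt {a b : S → Matrix ι ι ℂ} {ε γ β q r : ℝ}
    (hgap : ‖krausMatrix a - entangledProj ι‖ ≤ ε) (hε : ε ≤ 1 / 8)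
    (ha : Fintype.card ι * (1 - γ) ≤ (krausMap a 1).trace.re)
    (hb : (krausMap b 1).trace.re ≤ β / q ^ 2 * Fintype.card ι) (hq : 1 ≤ q) (hγ : 0 ≤ γ)
    (hβ : 0 ≤ β) (hr_half : 1 / 2 ≤ r)
    (hr : ∀ z ∈ (krausMatrix fun s => a s + b s).charpoly.roots, ‖z‖ < r) :
    1 - (γ + 8 * ε ^ 2 + (1 + 4 * β) / q) ≤ r := by
  obtain ⟨F, hF, htrace, hF_ge, hF_le, hupper⟩ :=
    exists_traceless_trace_krausMap_le (by linarith : 0 ≤ r) hr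
  have hP : 0 ≤ 1 - F := sub_nonneg.2 hF_le
  have hZ : 0 ≤ 1 + F := by simpa [neg_le_iff_add_nonneg'] using hF_ge
  have hP_le : 1 - F ≤ (2 : ℝ) • 1 := by
    rw [two_smul, sub_le_iff_le_add, add_assoc]
    exact le_add_of_nonneg_right hZ
  have hZ_le : 1 + F ≤ (2 : ℝ) • 1 := by rw [two_smul]; gcongr
  have hperturb := trace_mul_re_le_trace_mul_re
    (smul_krausMap_sub_smul_krausMap_le a b (by linarith : 0 < q) hZ) hP
  have ha_lower := le_trace_one_sub_mul_krausMap_one_add hgap hF htrace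
  have hb_upper := trace_mul_krausMap_re_le b zero_le_two hP_le hZ hZ_le
  rw [trace_mul_comm, trace_mul_comm (krausMap _ _)] at hperturb
  simp only [Matrix.mul_sub, Matrix.mul_smul, trace_sub, trace_smul, Complex.sub_re,
    Complex.smul_re, smul_eq_mul] at hperturb
  exact one_sub_le_of_perturbed_quadratic_bound (by exact_mod_cast Fintype.card_pos)
    (trace_mul_self_re_nonneg hF) hε hγ hβ hq hr_half ha ha_lower (hb_upper.trans (by gcongr))
    (hperturb.trans hupper)

theorem exists_root_charpoly_krausMatrix_norm_ge {a b : S → Matrix ι ι ℂ} {ε γ β q : ℝ}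
    (hgap : ‖krausMatrix a - entangledProj ι‖ ≤ ε)
    (ha : Fintype.card ι * (1 - γ) ≤ (krausMap a 1).trace.re)
    (hb : (krausMap b 1).trace.re ≤ β / q ^ 2 * Fintype.card ι) (hq : 1 ≤ q) (hγ : 0 ≤ γ)
    (hβ : 0 ≤ β) :
    ∃ z ∈ (krausMatrix fun s => a s + b s).charpoly.roots,
      1 - 2 * (γ + 32 * ε ^ 2 + (1 + 4 * β) / q) ≤ ‖z‖ := by
  by_contra! hlt
  set δ := γ + 32 * ε ^ 2 + (1 + 4 * β) / q
  have hδ : 0 < δ := by positivity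
  obtain ⟨z, hz⟩ := spectrum.nonempty (krausMatrix fun s => a s + b s)
  have hz_lt := hlt z ((Polynomial.mem_roots (charpoly_monic _).ne_zero).2
    (mem_spectrum_iff_isRoot_charpoly.1 hz))
  have hδ_lt : δ < 1 / 2 := by linarith [norm_nonneg z]
  have hq_pos : 0 ≤ (1 + 4 * β) / q := by positivity
  have hε : ε ≤ 1 / 8 := by nlinarith
  have hle := le_of_forall_root_charpoly_krausMatrix_norm_lt hgap hε ha hb hq hγ hβ
    (le_max_right (1 - 2 * δ) (1 / 2)) fun z hz => lt_max_of_lt_left (hlt z hz)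
  rcases le_max_iff.1 hle with h | h <;> linarith [sq_nonneg ε]

end Deterministic

/-! ### Operator norms -/

section OperatorNorm

variable {𝕜 : Type*} [RCLike 𝕜] {ι ι' : Type*} [Fintype ι] [Fintype ι']

lemma l2_opNorm_le_of_forall_sum_sq_le [DecidableEq ι'] {Z : Matrix ι ι' 𝕜} {ρ : ℝ} (hρ : 0 ≤ ρ)
    (h : ∀ x : ι' → 𝕜, ∑ i, ‖(Z *ᵥ x) i‖ ^ 2 ≤ ρ ^ 2 * ∑ j, ‖x j‖ ^ 2) : ‖Z‖ ≤ ρ := by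
  rw [l2_opNorm_def]
  refine ContinuousLinearMap.opNorm_le_bound _ hρ fun x => ?_
  refine abs_le_of_sq_le_sq' ?_ (by positivity) |>.2
  rw [mul_pow, EuclideanSpace.norm_sq_eq, EuclideanSpace.norm_sq_eq]
  exact h x.ofLp

lemma sum_norm_mulVec_sq_le [DecidableEq ι'] (Z : Matrix ι ι' 𝕜) (x : ι' → 𝕜) :
    ∑ i, ‖(Z *ᵥ x) i‖ ^ 2 ≤ ‖Z‖ ^ 2 * ∑ j, ‖x j‖ ^ 2 := by
  have h := pow_le_pow_left₀ (norm_nonneg _) (l2_opNorm_mulVec Z (WithLp.toLp 2 x)) 2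
  rwa [mul_pow, EuclideanSpace.norm_sq_eq, EuclideanSpace.norm_sq_eq] at h

-- The Schur test: Cauchy-Schwarz with respect to the weights `‖Z i j‖`.
lemma l2_opNorm_le_of_sum_norm_le [DecidableEq ι'] {Z : Matrix ι ι' 𝕜} {ρ : ℝ} (hρ : 0 ≤ ρ)
    (hrow : ∀ i, ∑ j, ‖Z i j‖ ≤ ρ) (hcol : ∀ j, ∑ i, ‖Z i j‖ ≤ ρ) : ‖Z‖ ≤ ρ := by
  refine l2_opNorm_le_of_forall_sum_sq_le hρ fun x => ?_
  have hentry (i : ι) : ‖(Z *ᵥ x) i‖ ^ 2 ≤ ρ * ∑ j, ‖Z i j‖ * ‖x j‖ ^ 2 := by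
    calc ‖(Z *ᵥ x) i‖ ^ 2 ≤ (∑ j, ‖Z i j‖ * ‖x j‖) ^ 2 := by
          gcongr
          exact (norm_sum_le _ _).trans_eq (by simp only [norm_mul])
      _ ≤ (∑ j, ‖Z i j‖) * ∑ j, ‖Z i j‖ * ‖x j‖ ^ 2 :=
          Finset.sum_sq_le_sum_mul_sum_of_sq_le_mul _ (fun _ _ => norm_nonneg _)
            (fun _ _ => by positivity) (fun _ _ => (by ring : _ = _).le)
      _ ≤ ρ * ∑ j, ‖Z i j‖ * ‖x j‖ ^ 2 := by
          gcongr
          exact hrow i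
  calc ∑ i, ‖(Z *ᵥ x) i‖ ^ 2 ≤ ∑ i, ρ * ∑ j, ‖Z i j‖ * ‖x j‖ ^ 2 :=
        Finset.sum_le_sum fun i _ => hentry i
    _ = ρ * ∑ j, (∑ i, ‖Z i j‖) * ‖x j‖ ^ 2 := by
        rw [← Finset.mul_sum, Finset.sum_comm]
        simp only [Finset.sum_mul]
    _ ≤ ρ * ∑ j, ρ * ‖x j‖ ^ 2 := by
        gcongr
        exact hcol _
    _ = ρ ^ 2 * ∑ j, ‖x j‖ ^ 2 := by rw [← Finset.mul_sum]; ring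

lemma l2_opNorm_sq_le_sum_norm_sq [DecidableEq ι'] (Z : Matrix ι ι' 𝕜) :
    ‖Z‖ ^ 2 ≤ ∑ i, ∑ j, ‖Z i j‖ ^ 2 := by
  refine (Real.le_sqrt (norm_nonneg _) (by positivity)).1 ?_
  refine l2_opNorm_le_of_forall_sum_sq_le (Real.sqrt_nonneg _) fun x => ?_
  rw [Real.sq_sqrt (by positivity), Finset.sum_mul]
  refine Finset.sum_le_sum fun i _ => ?_
  calc ‖(Z *ᵥ x) i‖ ^ 2 ≤ (∑ j, ‖Z i j‖ * ‖x j‖) ^ 2 := by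
        gcongr
        exact (norm_sum_le _ _).trans_eq (by simp only [norm_mul])
    _ ≤ (∑ j, ‖Z i j‖ ^ 2) * ∑ j, ‖x j‖ ^ 2 := Finset.sum_mul_sq_le_sq_mul_sq _ _ _

lemma l2_opNorm_map_ofReal_le [DecidableEq ι'] (M : Matrix ι ι' ℝ) :
    ‖M.map ((↑) : ℝ → ℂ)‖ ≤ ‖M‖ := by
  refine l2_opNorm_le_of_forall_sum_sq_le (norm_nonneg _) fun x => ?_
  have hsq (z : ℂ) : ‖z‖ ^ 2 = ‖z.re‖ ^ 2 + ‖z.im‖ ^ 2 := by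
    simp only [Complex.sq_norm, Complex.normSq_apply, Real.norm_eq_abs, sq_abs]; ring
  have hre (i : ι) : ((M.map ((↑) : ℝ → ℂ) *ᵥ x) i).re = (M *ᵥ fun j => (x j).re) i := by
    simp [mulVec, dotProduct]
  have him (i : ι) : ((M.map ((↑) : ℝ → ℂ) *ᵥ x) i).im = (M *ᵥ fun j => (x j).im) i := by
    simp [mulVec, dotProduct]
  simp only [hsq, hre, him, Finset.sum_add_distrib, mul_add]
  exact add_le_add (sum_norm_mulVec_sq_le M _) (sum_norm_mulVec_sq_le M _)

lemma l2_opNorm_one_le [DecidableEq ι] : ‖(1 : Matrix ι ι 𝕜)‖ ≤ 1 := by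
  rw [← diagonal_one, l2_opNorm_diagonal]
  exact (pi_norm_le_iff_of_nonneg zero_le_one).2 fun _ => norm_one.le

lemma l2_opNorm_kronecker_one_le [DecidableEq ι] [DecidableEq ι'] (A : Matrix ι ι 𝕜) :
    ‖A ⊗ₖ (1 : Matrix ι' ι' 𝕜)‖ ≤ ‖A‖ := by
  refine l2_opNorm_le_of_forall_sum_sq_le (norm_nonneg _) fun x => ?_
  have hslice (i : ι) (k : ι') :
      ((A ⊗ₖ (1 : Matrix ι' ι' 𝕜)) *ᵥ x) (i, k) = (A *ᵥ fun j => x (j, k)) i := by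
    simp [mulVec, dotProduct, Fintype.sum_prod_type, one_apply]
  simp only [Fintype.sum_prod_type_right, hslice, Finset.mul_sum (s := (Finset.univ : Finset ι'))]
  exact Finset.sum_le_sum fun k _ => sum_norm_mulVec_sq_le A _

lemma l2_opNorm_one_kronecker_le [DecidableEq ι] [DecidableEq ι'] (B : Matrix ι' ι' 𝕜) :
    ‖(1 : Matrix ι ι 𝕜) ⊗ₖ B‖ ≤ ‖B‖ := by
  refine l2_opNorm_le_of_forall_sum_sq_le (norm_nonneg _) fun x => ?_
  have hslice (i : ι) (k : ι') :
      (((1 : Matrix ι ι 𝕜) ⊗ₖ B) *ᵥ x) (i, k) = (B *ᵥ fun l => x (i, l)) k := by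
    simp [mulVec, dotProduct, Fintype.sum_prod_type, one_apply]
  simp only [Fintype.sum_prod_type, hslice, Finset.mul_sum (s := (Finset.univ : Finset ι))]
  exact Finset.sum_le_sum fun i _ => sum_norm_mulVec_sq_le B _

lemma l2_opNorm_kronecker_le [DecidableEq ι] [DecidableEq ι'] (A : Matrix ι ι 𝕜)
    (B : Matrix ι' ι' 𝕜) : ‖A ⊗ₖ B‖ ≤ ‖A‖ * ‖B‖ := by
  calc ‖A ⊗ₖ B‖ = ‖A ⊗ₖ (1 : Matrix ι' ι' 𝕜) * (1 : Matrix ι ι 𝕜) ⊗ₖ B‖ := by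
        rw [← mul_kronecker_mul, mul_one, one_mul]
    _ ≤ ‖A ⊗ₖ (1 : Matrix ι' ι' 𝕜)‖ * ‖(1 : Matrix ι ι 𝕜) ⊗ₖ B‖ := l2_opNorm_mul _ _
    _ ≤ ‖A‖ * ‖B‖ := mul_le_mul (l2_opNorm_kronecker_one_le A) (l2_opNorm_one_kronecker_le B)
        (norm_nonneg _) (norm_nonneg _)

lemma l2_opNorm_map_conj [DecidableEq ι] (A : Matrix ι ι ℂ) :
    ‖A.map (starRingEnd ℂ)‖ ≤ ‖A‖ := by
  refine l2_opNorm_le_of_forall_sum_sq_le (norm_nonneg _) fun x => ?_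
  have hconj (i : ι) : (A.map (starRingEnd ℂ) *ᵥ x) i = star ((A *ᵥ star x) i) := by
    simp [mulVec, dotProduct]
  simpa only [hconj, norm_star, Pi.star_apply] using sum_norm_mulVec_sq_le A (star x)

lemma l2_opNorm_kronecker_map_conj_le [DecidableEq ι] (A : Matrix ι ι ℂ) :
    ‖A ⊗ₖ A.map (starRingEnd ℂ)‖ ≤ ‖A‖ ^ 2 := by
  rw [sq]
  exact (l2_opNorm_kronecker_le _ _).trans
    (mul_le_mul_of_nonneg_left (l2_opNorm_map_conj A) (norm_nonneg _))

end OperatorNorm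

/-! ### Doubly stochastic matrices -/

section DoublyStochastic

variable {ι : Type*} [Fintype ι]

/-- The rank one projection `J / n` onto the constant vectors. -/
noncomputable def averagingMatrix (ι : Type*) [Fintype ι] : Matrix ι ι ℝ :=
  of fun _ _ => (Fintype.card ι : ℝ)⁻¹

lemma exists_smul_add_smul_mulVec_eq_zero {B : Matrix ι ι ℝ} (hB : B.rank ≤ 1) (x y : ι → ℝ) :
    ∃ a b : ℝ, (a, b) ≠ 0 ∧ B *ᵥ (a • x + b • y) = 0 := by
  let combine : ℝ × ℝ →ₗ[ℝ] B.mulVecLin.range :=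
    B.mulVecLin.rangeRestrict ∘ₗ (LinearMap.toSpanSingleton ℝ _ x).coprod
      (LinearMap.toSpanSingleton ℝ _ y)
  have hker : combine.ker ≠ ⊥ := by
    refine LinearMap.ker_ne_bot_of_finrank_lt ?_
    have : Module.finrank ℝ (ℝ × ℝ) = 2 := by simp
    rw [this]
    exact hB.trans_lt one_lt_two
  obtain ⟨⟨a, b⟩, hmem, hne⟩ := (Submodule.ne_bot_iff _).1 hker
  exact ⟨a, b, hne, by simpa [combine] using congrArg Subtype.val (LinearMap.mem_ker.1 hmem)⟩

lemma sum_add_mul_sq_of_sum_eq_zero (a b : ℝ) {z : ι → ℝ} (hz : ∑ i, z i = 0) :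
    ∑ i, (a + b * z i) ^ 2 = a ^ 2 * Fintype.card ι + b ^ 2 * ∑ i, z i ^ 2 := by
  calc ∑ i, (a + b * z i) ^ 2 = ∑ i, (a ^ 2 + 2 * a * b * z i + b ^ 2 * z i ^ 2) :=
        Finset.sum_congr rfl fun i _ => by ring
    _ = a ^ 2 * Fintype.card ι + b ^ 2 * ∑ i, z i ^ 2 := by
        simp only [Finset.sum_add_distrib, ← Finset.mul_sum, hz, Finset.sum_const,
          Finset.card_univ, nsmul_eq_mul]
        ring

variable [DecidableEq ι] {η : Matrix ι ι ℝ}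

lemma l2_opNorm_le_one_of_doublyStochastic (hη : ∀ i j, 0 ≤ η i j) (hrow : ∀ i, ∑ j, η i j = 1)
    (hcol : ∀ j, ∑ i, η i j = 1) : ‖η‖ ≤ 1 :=
  l2_opNorm_le_of_sum_norm_le zero_le_one
    (fun i => by simp only [Real.norm_of_nonneg (hη _ _), hrow, le_refl])
    (fun j => by simp only [Real.norm_of_nonneg (hη _ _), hcol, le_refl])

-- The rank one matrix `B` has a kernel vector in the plane spanned by the constants and `y`, and
-- `η` preserves orthogonality in that plane while acting isometrically on the constants.
lemma sum_mulVec_sq_le_of_sum_eq_zero (hη : ∀ i j, 0 ≤ η i j) (hrow : ∀ i, ∑ j, η i j = 1)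
    (hcol : ∀ j, ∑ i, η i j = 1) {B : Matrix ι ι ℝ} (hB : B.rank ≤ 1) {y : ι → ℝ}
    (hy : ∑ j, y j = 0) : ∑ i, (η *ᵥ y) i ^ 2 ≤ ‖η - B‖ ^ 2 * ∑ j, y j ^ 2 := by
  rcases isEmpty_or_nonempty ι with _ | _
  · simp
  rcases le_or_gt 1 ‖η - B‖ with hbig | hsmall
  · have hcontract := sum_norm_mulVec_sq_le η y
    simp only [Real.norm_eq_abs, sq_abs] at hcontract
    refine hcontract.trans ?_
    gcongr
    exact (l2_opNorm_le_one_of_doublyStochastic hη hrow hcol).trans hbig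
  have hone : η *ᵥ 1 = 1 := by ext i; simp [mulVec, dotProduct, hrow]
  have hsum : ∑ i, (η *ᵥ y) i = 0 := by
    simp only [mulVec, dotProduct]
    rw [Finset.sum_comm]
    simp only [← Finset.sum_mul, hcol, one_mul, hy]
  obtain ⟨a, b, hab, hker⟩ := exists_smul_add_smul_mulVec_eq_zero hB 1 y
  have hbound := sum_norm_mulVec_sq_le (η - B) (a • 1 + b • y)
  rw [sub_mulVec, hker, sub_zero, mulVec_add, mulVec_smul, mulVec_smul, hone] at hbound
  simp only [Pi.add_apply, Pi.smul_apply, Pi.one_apply, smul_eq_mul, mul_one, Real.norm_eq_abs,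
    sq_abs, sum_add_mul_sq_of_sum_eq_zero a b hsum, sum_add_mul_sq_of_sum_eq_zero a b hy] at hbound
  have hN : ‖η - B‖ ^ 2 < 1 := pow_lt_one₀ (norm_nonneg _) hsmall two_ne_zero
  have hb : b ≠ 0 := by
    rintro rfl
    have ha : 0 < a ^ 2 * Fintype.card ι := by
      have ha : a ≠ 0 := fun h => hab (by rw [h]; rfl)
      have hcard : (0 : ℝ) < Fintype.card ι := by exact_mod_cast Fintype.card_pos
      exact mul_pos (by positivity) hcard
    nlinarith
  have hloss : 0 ≤ (1 - ‖η - B‖ ^ 2) * (a ^ 2 * Fintype.card ι) :=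
    mul_nonneg (sub_nonneg.2 hN.le) (by positivity)
  refine le_of_mul_le_mul_left ?_ (pow_pos (abs_pos.2 hb) 2)
  rw [sq_abs]
  linarith

lemma norm_sub_averagingMatrix_le_norm_sub (hη : ∀ i j, 0 ≤ η i j) (hrow : ∀ i, ∑ j, η i j = 1)
    (hcol : ∀ j, ∑ i, η i j = 1) {B : Matrix ι ι ℝ} (hB : B.rank ≤ 1) :
    ‖η - averagingMatrix ι‖ ≤ ‖η - B‖ := by
  rcases isEmpty_or_nonempty ι with _ | _
  · exact (congrArg norm (Subsingleton.elim _ _)).le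
  refine l2_opNorm_le_of_forall_sum_sq_le (norm_nonneg _) fun x => ?_
  set c : ℝ := (Fintype.card ι : ℝ)⁻¹ * ∑ j, x j with hc
  have hmean : ∑ j, (x j - c) = 0 := by simp [hc]
  have happly : (η - averagingMatrix ι) *ᵥ x = η *ᵥ fun j => x j - c := by
    ext i
    simp [averagingMatrix, mulVec, dotProduct, sub_mul, mul_sub, Finset.sum_sub_distrib,
      ← Finset.sum_mul, ← Finset.mul_sum, hrow, hc]
  have hdecomp := sum_add_mul_sq_of_sum_eq_zero c 1 hmean
  simp only [one_mul, add_sub_cancel, one_pow] at hdecomp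
  simp only [happly, Real.norm_eq_abs, sq_abs, hdecomp]
  refine (sum_mulVec_sq_le_of_sum_eq_zero hη hrow hcol hB hmean).trans ?_
  gcongr
  exact le_add_of_nonneg_left (by positivity)

lemma norm_sub_averagingMatrix_le_sval (hη : ∀ i j, 0 ≤ η i j) (hrow : ∀ i, ∑ j, η i j = 1)
    (hcol : ∀ j, ∑ i, η i j = 1) : ‖η - averagingMatrix ι‖ ≤ Matrix.sval η 1 := by
  have : Nonempty {B : Matrix ι ι ℝ // B.rank ≤ 1} := ⟨0, by simp⟩
  exact le_ciInf fun B => norm_sub_averagingMatrix_le_norm_sub hη hrow hcol B.2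

/-- The isometry `e_i ↦ e_i ⊗ e_i` of `ℂ^ι` into `ℂ^ι ⊗ ℂ^ι`. -/
def diagonalIsometry (ι : Type*) [DecidableEq ι] : Matrix (ι × ι) ι ℂ :=
  of fun x i => if x = (i, i) then 1 else 0

lemma diagonalIsometry_mul_mul_conjTranspose_apply (M : Matrix ι ι ℂ) (x y : ι × ι) :
    (diagonalIsometry ι * M * (diagonalIsometry ι)ᴴ) x y =
      if x.1 = x.2 ∧ y.1 = y.2 then M x.1 y.1 else 0 := by
  obtain ⟨i, k⟩ := x
  obtain ⟨j, l⟩ := y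
  simp only [diagonalIsometry, mul_apply, conjTranspose_apply, of_apply, Prod.mk.injEq, ite_and,
    ite_mul, one_mul, zero_mul, Finset.sum_ite_eq, Finset.mem_univ, if_true, apply_ite star,
    star_one, star_zero, mul_ite, mul_one, mul_zero]
  grind

lemma entangledProj_eq :
    entangledProj ι =
      diagonalIsometry ι * (averagingMatrix ι).map ((↑) : ℝ → ℂ) * (diagonalIsometry ι)ᴴ := by
  ext x y
  rw [diagonalIsometry_mul_mul_conjTranspose_apply]
  simp only [entangledProj, averagingMatrix, vecMulVec, vec, Matrix.smul_apply, of_apply, map_apply,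
    one_apply, smul_eq_mul, Complex.ofReal_inv, Complex.ofReal_natCast]
  grind

lemma norm_diagonalIsometry_mul_mul_conjTranspose_le (M : Matrix ι ι ℂ) :
    ‖diagonalIsometry ι * M * (diagonalIsometry ι)ᴴ‖ ≤ ‖M‖ := by
  have hiso : (diagonalIsometry ι)ᴴ * diagonalIsometry ι = 1 := by
    ext i j
    simp [diagonalIsometry, mul_apply, one_apply, eq_comm]
  have hnorm : ‖diagonalIsometry ι‖ ≤ 1 := by
    have h := l2_opNorm_conjTranspose_mul_self (diagonalIsometry ι)
    rw [hiso] at h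
    exact abs_le_of_sq_le_sq' (by nlinarith [l2_opNorm_one_le (𝕜 := ℂ) (ι := ι)]) zero_le_one |>.2
  calc ‖diagonalIsometry ι * M * (diagonalIsometry ι)ᴴ‖
      ≤ ‖diagonalIsometry ι‖ * ‖M‖ * ‖(diagonalIsometry ι)ᴴ‖ :=
        (l2_opNorm_mul _ _).trans (mul_le_mul_of_nonneg_right (l2_opNorm_mul _ _) (norm_nonneg _))
    _ ≤ 1 * ‖M‖ * 1 := by
        rw [l2_opNorm_conjTranspose]
        gcongr
    _ = ‖M‖ := by ring

end DoublyStochastic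

/-! ### Truncation of random variables -/

section Truncate

variable {V : Type*} [NormedAddCommGroup V]

/-- The cut-off of `z` at level `‖z‖ ^ 2 ≤ c`, applied below both to single entries and, in
operator norm, to whole matrices. -/
noncomputable def truncate (c : ℝ) (z : V) : V := if ‖z‖ ^ 2 ≤ c then z else 0

variable {c : ℝ} {z : V}

lemma truncate_of_le (h : ‖z‖ ^ 2 ≤ c) : truncate c z = z := if_pos h

lemma truncate_of_lt (h : c < ‖z‖ ^ 2) : truncate c z = 0 := if_neg h.not_ge

lemma norm_truncate_sq_le (hc : 0 ≤ c) (z : V) : ‖truncate c z‖ ^ 2 ≤ c := by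
  rw [truncate]
  split_ifs with h
  · exact h
  · simpa using hc

lemma norm_truncate_le (c : ℝ) (z : V) : ‖truncate c z‖ ≤ ‖z‖ := by
  rw [truncate]
  split_ifs <;> simp

lemma norm_sub_truncate_le (c : ℝ) (z : V) : ‖z - truncate c z‖ ≤ ‖z‖ := by
  rw [truncate]
  split_ifs <;> simp

lemma norm_truncate_sub_truncate_sq_le (hc : 0 ≤ c) (y z : V) :
    ‖truncate c y - truncate c z‖ ^ 2 ≤ 4 * c := by
  have hle (w : V) : ‖truncate c w‖ ≤ √c := Real.le_sqrt_of_sq_le (norm_truncate_sq_le hc w)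
  calc ‖truncate c y - truncate c z‖ ^ 2 ≤ (√c + √c) ^ 2 := by
        gcongr
        exact (norm_sub_le _ _).trans (add_le_add (hle y) (hle z))
    _ = 4 * c := by rw [← two_mul, mul_pow, Real.sq_sqrt hc]; norm_num

lemma norm_truncate_sq_add_norm_sub_truncate_sq (c : ℝ) (z : V) :
    ‖truncate c z‖ ^ 2 + ‖z - truncate c z‖ ^ 2 = ‖z‖ ^ 2 := by
  rw [truncate]
  split_ifs <;> simp

lemma pow_mul_norm_sub_truncate_pow_le (hc : 0 ≤ c) (z : V) (k : ℕ) {q : ℕ} (hq : q ≠ 0) :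
    c ^ k * ‖z - truncate c z‖ ^ q ≤ ‖z‖ ^ (2 * k + q) := by
  rcases le_or_gt (‖z‖ ^ 2) c with h | h
  · rw [truncate_of_le h, sub_self, norm_zero, zero_pow hq, mul_zero]
    positivity
  · rw [truncate_of_lt h, sub_zero, pow_add, pow_mul]
    gcongr

lemma measurable_truncate [MeasurableSpace V] [OpensMeasurableSpace V] (c : ℝ) :
    Measurable (truncate c : V → V) :=
  Measurable.ite (measurableSet_le (measurable_norm.pow_const 2) measurable_const) measurable_id
    measurable_const

lemma BoundedMeasurable.truncate [MeasurableSpace V] [OpensMeasurableSpace V] (c : ℝ) :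
    BoundedMeasurable (truncate c : V → V) := by
  refine ⟨measurable_truncate c, √(max c 0), fun z => Real.le_sqrt_of_sq_le ?_⟩
  rcases le_or_gt (‖z‖ ^ 2) c with h | h
  · rw [truncate_of_le h]
    exact h.trans (le_max_left _ _)
  · simp [truncate_of_lt h]

lemma memLp_truncate [MeasurableSpace V] [BorelSpace V] [SecondCountableTopology V] {Ω : Type*}
    [MeasurableSpace Ω] {μ : Measure Ω} {X : Ω → V} {p : ℝ≥0∞} (hX : MemLp X p μ) (c : ℝ) :
    MemLp (fun ω => truncate c (X ω)) p μ :=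
  hX.of_le ((measurable_truncate c).comp_aemeasurable hX.1.aemeasurable).aestronglyMeasurable
    (Filter.Eventually.of_forall fun _ => norm_truncate_le _ _)

end Truncate

section Moments

variable {Ω : Type*} [MeasurableSpace Ω] {μ : Measure Ω} [IsProbabilityMeasure μ]

lemma pow_integral_le_integral_pow {f : Ω → ℝ} (hf : Integrable f μ) (hf0 : ∀ ω, 0 ≤ f ω) (k : ℕ)
    (hfk : Integrable (fun ω => f ω ^ k) μ) : (∫ ω, f ω ∂μ) ^ k ≤ ∫ ω, f ω ^ k ∂μ :=
  (convexOn_pow k).map_integral_le (continuous_pow k).continuousOn isClosed_Ici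
    (Filter.Eventually.of_forall hf0) hf hfk

section NormedSpace

variable {V : Type*} [NormedAddCommGroup V] {X : Ω → V}

lemma integrable_norm_pow_of_le {N k : ℕ} (hX : MemLp X N μ) (hk : k ≤ N) :
    Integrable (fun ω => ‖X ω‖ ^ k) μ :=
  (hX.mono_exponent (by exact_mod_cast hk)).integrable_norm_pow'

lemma norm_integral_pow_le [NormedSpace ℝ V] {k : ℕ} (hX : MemLp X k μ) (hk : 1 ≤ k) :
    ‖∫ ω, X ω ∂μ‖ ^ k ≤ ∫ ω, ‖X ω‖ ^ k ∂μ := by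
  have hnorm : Integrable (fun ω => ‖X ω‖) μ := by simpa using integrable_norm_pow_of_le hX hk
  calc ‖∫ ω, X ω ∂μ‖ ^ k ≤ (∫ ω, ‖X ω‖ ∂μ) ^ k := by
        gcongr
        exact norm_integral_le_integral_norm _
    _ ≤ ∫ ω, ‖X ω‖ ^ k ∂μ :=
        pow_integral_le_integral_pow hnorm (fun _ => norm_nonneg _) k hX.integrable_norm_pow'

lemma integral_norm_sub_integral_pow_le [NormedSpace ℝ V] {k : ℕ} (hX : MemLp X k μ)
    (hk : 1 ≤ k) :
    ∫ ω, ‖X ω - ∫ ω', X ω' ∂μ‖ ^ k ∂μ ≤ 2 ^ k * ∫ ω, ‖X ω‖ ^ k ∂μ := by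
  set m := ∫ ω, X ω ∂μ
  have hXk := hX.integrable_norm_pow'
  calc ∫ ω, ‖X ω - m‖ ^ k ∂μ ≤ ∫ ω, 2 ^ (k - 1) * (‖X ω‖ ^ k + ‖m‖ ^ k) ∂μ := by
        refine integral_mono (hX.sub (memLp_const m)).integrable_norm_pow'
          ((hXk.add (integrable_const _)).const_mul _) fun ω => ?_
        exact (pow_le_pow_left₀ (norm_nonneg _) (norm_sub_le _ _) k).trans
          (add_pow_le (norm_nonneg _) (norm_nonneg _) k)
    _ = 2 ^ (k - 1) * (∫ ω, ‖X ω‖ ^ k ∂μ + ‖m‖ ^ k) := by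
        rw [integral_const_mul, integral_add hXk (integrable_const _)]
        simp
    _ ≤ 2 ^ (k - 1) * (∫ ω, ‖X ω‖ ^ k ∂μ + ∫ ω, ‖X ω‖ ^ k ∂μ) := by
        gcongr
        exact norm_integral_pow_le hX hk
    _ = 2 ^ k * ∫ ω, ‖X ω‖ ^ k ∂μ := by
        rw [← two_mul, ← mul_assoc, ← pow_succ, Nat.sub_add_cancel hk]

variable [MeasurableSpace V] [BorelSpace V] [SecondCountableTopology V]

lemma pow_mul_integral_norm_sub_truncate_pow_le {c : ℝ} (hc : 0 ≤ c) (k : ℕ) {q : ℕ} (hq : q ≠ 0)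
    (hX : MemLp X (2 * k + q : ℕ) μ) :
    c ^ k * ∫ ω, ‖X ω - truncate c (X ω)‖ ^ q ∂μ ≤ ∫ ω, ‖X ω‖ ^ (2 * k + q) ∂μ := by
  rw [← integral_const_mul]
  refine integral_mono ?_ hX.integrable_norm_pow' fun ω =>
    pow_mul_norm_sub_truncate_pow_le hc (X ω) k hq
  exact (integrable_norm_pow_of_le (hX.sub (memLp_truncate hX c)) (by lia)).const_mul _

end NormedSpace

lemma integral_norm_sub_integral_sq {H : Type*} [NormedAddCommGroup H] [InnerProductSpace ℝ H]
    [CompleteSpace H] {X : Ω → H} (hX : MemLp X 2 μ) :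
    ∫ ω, ‖X ω - ∫ ω', X ω' ∂μ‖ ^ 2 ∂μ = ∫ ω, ‖X ω‖ ^ 2 ∂μ - ‖∫ ω, X ω ∂μ‖ ^ 2 := by
  have hX1 : Integrable X μ := hX.integrable one_le_two
  set m := ∫ ω, X ω ∂μ with hm
  have hinner : Integrable (fun ω => 2 * inner ℝ m (X ω)) μ := (hX1.const_inner m).const_mul 2
  have hsq : Integrable (fun ω => ‖X ω‖ ^ 2) μ := hX.integrable_norm_pow'
  have hdiff : Integrable (fun ω => ‖X ω‖ ^ 2 - 2 * inner ℝ m (X ω)) μ := hsq.sub hinner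
  simp only [norm_sub_sq_real, real_inner_comm m]
  rw [integral_add hdiff (integrable_const _), integral_sub hsq hinner,
    integral_const_mul, integral_inner hX1, ← hm,
    real_inner_self_eq_norm_sq, integral_const, probReal_univ, one_smul]
  ring

end Moments

section CenteredTruncation

variable {Ω : Type*} [MeasurableSpace Ω] {μ : Measure Ω} {V : Type*} [NormedAddCommGroup V]
  [NormedSpace ℝ V] {X : Ω → V} {c : ℝ}

/-- The map `z ↦ truncate c z - E (truncate c X)`, which turns every copy of `X` into a centered
bounded variable. -/
noncomputable def centeredTruncation (μ : Measure Ω) (X : Ω → V) (c : ℝ) (z : V) : V :=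
  truncate c z - ∫ ω, truncate c (X ω) ∂μ

lemma measurable_centeredTruncation [MeasurableSpace V] [BorelSpace V]
    [SecondCountableTopology V] : Measurable (centeredTruncation μ X c) :=
  (measurable_truncate c).sub_const _

variable [IsProbabilityMeasure μ]

lemma norm_centeredTruncation_sq_le (hc : 0 ≤ c) (z : V) :
    ‖centeredTruncation μ X c z‖ ^ 2 ≤ 4 * c := by
  have hle (y : V) : ‖truncate c y‖ ≤ √c := Real.le_sqrt_of_sq_le (norm_truncate_sq_le hc y)
  have hmean : ‖∫ ω, truncate c (X ω) ∂μ‖ ≤ √c := by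
    simpa using norm_integral_le_of_norm_le_const
      (Filter.Eventually.of_forall fun ω => hle (X ω)) (μ := μ)
  calc ‖centeredTruncation μ X c z‖ ^ 2 ≤ (√c + √c) ^ 2 := by
        gcongr
        exact (norm_sub_le _ _).trans (add_le_add (hle z) hmean)
    _ = 4 * c := by rw [← two_mul, mul_pow, Real.sq_sqrt hc]; norm_num

lemma integral_centeredTruncation [MeasurableSpace V] [BorelSpace V] [SecondCountableTopology V]
    [CompleteSpace V] (hX : MemLp X 1 μ) : ∫ ω, centeredTruncation μ X c (X ω) ∂μ = 0 := by
  simp only [centeredTruncation]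
  rw [integral_sub ((memLp_truncate hX c).integrable le_rfl) (integrable_const _)]
  simp

end CenteredTruncation

section IsCenteredEntry

variable {Ω : Type*} [MeasurableSpace Ω]

/-- A centered random variable of variance `v` whose moment of order 36 is at most `κ v ^ 18`; a
model of the entries of the random matrix. The order 36 is what makes the truncation error
`O(v / θ ^ 16)` at level `‖X‖ ^ 2 ≤ v θ`, with `θ ^ 16 = d` below. -/
structure IsCenteredEntry (μ : Measure Ω) (X : Ω → ℂ) (v κ : ℝ) : Prop where
  memLp : MemLp X 36 μ
  centered : ∫ ω, X ω ∂μ = 0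
  variance : ∫ ω, ‖X ω‖ ^ 2 ∂μ = v
  moment_le : ∫ ω, ‖X ω‖ ^ 36 ∂μ ≤ κ * v ^ 18

namespace IsCenteredEntry

variable {μ : Measure Ω} {X : Ω → ℂ} {v κ κ' θ : ℝ}

lemma variance_nonneg (h : IsCenteredEntry μ X v κ) : 0 ≤ v :=
  h.variance ▸ integral_nonneg fun _ => sq_nonneg _

lemma mono (h : IsCenteredEntry μ X v κ) (hκ : κ ≤ κ') : IsCenteredEntry μ X v κ' where
  memLp := h.memLp
  centered := h.centered
  variance := h.variance
  moment_le := h.moment_le.trans <| by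
    have := h.variance_nonneg
    gcongr

variable [IsProbabilityMeasure μ]

lemma memLp_of_le (h : IsCenteredEntry μ X v κ) {k : ℕ} (hk : k ≤ 36) : MemLp X k μ :=
  h.memLp.mono_exponent (by exact_mod_cast hk)

lemma memLp_sub_truncate (h : IsCenteredEntry μ X v κ) (c : ℝ) {k : ℕ} (hk : k ≤ 36) :
    MemLp (fun ω => X ω - truncate c (X ω)) k μ :=
  (h.memLp_of_le hk).sub (memLp_truncate (h.memLp_of_le hk) c)

lemma memLp_centeredTruncation (h : IsCenteredEntry μ X v κ) (c : ℝ) {k : ℕ} (hk : k ≤ 36) :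
    MemLp (fun ω => centeredTruncation μ X c (X ω)) k μ :=
  (memLp_truncate (h.memLp_of_le hk) c).sub (memLp_const _)

lemma ae_eq_zero_of_variance_eq_zero (h : IsCenteredEntry μ X 0 κ) : X =ᵐ[μ] 0 := by
  have hsq := (integral_eq_zero_iff_of_nonneg (fun ω => sq_nonneg ‖X ω‖)
    (h.memLp_of_le (k := 2) (by lia)).integrable_norm_pow').1 h.variance
  filter_upwards [hsq] with ω hω
  simpa using hω

lemma integral_norm_pow_four_le (h : IsCenteredEntry μ X v κ) (hκ : 1 ≤ κ) :
    ∫ ω, ‖X ω‖ ^ 4 ∂μ ≤ κ * v ^ 2 := by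
  have hpow : (∫ ω, ‖X ω‖ ^ 4 ∂μ) ^ 9 ≤ (κ * v ^ 2) ^ 9 := by
    calc (∫ ω, ‖X ω‖ ^ 4 ∂μ) ^ 9 ≤ ∫ ω, (‖X ω‖ ^ 4) ^ 9 ∂μ := by
          refine pow_integral_le_integral_pow (h.memLp_of_le (by lia)).integrable_norm_pow'
            (fun _ => by positivity) 9 ?_
          simpa only [← pow_mul] using (h.memLp_of_le le_rfl).integrable_norm_pow'
      _ = ∫ ω, ‖X ω‖ ^ 36 ∂μ := by simp only [← pow_mul]
      _ ≤ κ * v ^ 18 := h.moment_le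
      _ ≤ κ ^ 9 * v ^ 18 := by
          have := h.variance_nonneg
          gcongr
          exact le_self_pow₀ hκ (by lia)
      _ = (κ * v ^ 2) ^ 9 := by ring
  exact le_of_pow_le_pow_left₀ (by lia) (by positivity) hpow

lemma integral_norm_sub_truncate_pow_le (h : IsCenteredEntry μ X v κ) (hκ : 0 ≤ κ) (hθ : 1 ≤ θ)
    {q : ℕ} (hq0 : q ≠ 0) (hq2 : q ≤ 2) :
    ∫ ω, ‖X ω - truncate (v * θ) (X ω)‖ ^ (2 * q) ∂μ ≤ κ * v ^ q / θ ^ 16 := by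
  rcases h.variance_nonneg.eq_or_lt with rfl | hv
  · refine (integral_eq_zero_of_ae ?_).trans_le (by positivity)
    filter_upwards [h.ae_eq_zero_of_variance_eq_zero] with ω hω
    have hle : ‖X ω - truncate (0 * θ) (X ω)‖ ≤ 0 :=
      (norm_sub_truncate_le _ _).trans_eq (by simp [hω])
    rw [norm_le_zero_iff.1 hle]
    simp [hq0]
  · have htail : (v * θ) ^ (18 - q) * ∫ ω, ‖X ω - truncate (v * θ) (X ω)‖ ^ (2 * q) ∂μ
        ≤ κ * v ^ 18 := by
      refine (pow_mul_integral_norm_sub_truncate_pow_le (by positivity) (18 - q) (by lia)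
        (h.memLp_of_le (by lia))).trans ?_
      rw [show 2 * (18 - q) + 2 * q = 36 by lia]
      exact h.moment_le
    rw [le_div_iff₀' (by positivity)]
    refine le_of_mul_le_mul_left ?_ (pow_pos hv (18 - q))
    calc v ^ (18 - q) * (θ ^ 16 * ∫ ω, ‖X ω - truncate (v * θ) (X ω)‖ ^ (2 * q) ∂μ)
        ≤ v ^ (18 - q) * (θ ^ (18 - q) * ∫ ω, ‖X ω - truncate (v * θ) (X ω)‖ ^ (2 * q) ∂μ) := by
          gcongr
          lia
      _ ≤ κ * v ^ 18 := by rwa [← mul_assoc, ← mul_pow]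
      _ = v ^ (18 - q) * (κ * v ^ q) := by
          rw [mul_left_comm, ← pow_add, Nat.sub_add_cancel (by lia)]

lemma sub_centeredTruncation_eq (h : IsCenteredEntry μ X v κ) (c : ℝ) (z : ℂ) :
    z - centeredTruncation μ X c z
      = (z - truncate c z) - ∫ ω, (X ω - truncate c (X ω)) ∂μ := by
  have hX : MemLp X 1 μ := by exact_mod_cast h.memLp_of_le (k := 1) (by lia)
  rw [integral_sub (hX.integrable le_rfl) ((memLp_truncate hX c).integrable le_rfl), h.centered,
    centeredTruncation]
  ring

lemma integral_norm_sub_centeredTruncation_pow_le (h : IsCenteredEntry μ X v κ) (hκ : 0 ≤ κ)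
    (hθ : 1 ≤ θ) {q : ℕ} (hq0 : q ≠ 0) (hq2 : q ≤ 2) :
    ∫ ω, ‖X ω - centeredTruncation μ X (v * θ) (X ω)‖ ^ (2 * q) ∂μ
      ≤ 2 ^ (2 * q) * (κ * v ^ q / θ ^ 16) := by
  simp only [h.sub_centeredTruncation_eq]
  refine (integral_norm_sub_integral_pow_le (h.memLp_sub_truncate _ (by lia)) (by lia)).trans ?_
  gcongr
  exact h.integral_norm_sub_truncate_pow_le hκ hθ hq0 hq2

lemma integral_norm_centeredTruncation_pow_four_le (h : IsCenteredEntry μ X v κ) (hκ : 1 ≤ κ)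
    (c : ℝ) : ∫ ω, ‖centeredTruncation μ X c (X ω)‖ ^ 4 ∂μ ≤ 16 * (κ * v ^ 2) := by
  have hX : MemLp X (4 : ℕ) μ := h.memLp_of_le (by lia)
  calc ∫ ω, ‖centeredTruncation μ X c (X ω)‖ ^ 4 ∂μ
      ≤ 2 ^ 4 * ∫ ω, ‖truncate c (X ω)‖ ^ 4 ∂μ :=
        integral_norm_sub_integral_pow_le (memLp_truncate hX c) (by lia)
    _ ≤ 2 ^ 4 * ∫ ω, ‖X ω‖ ^ 4 ∂μ := by
        gcongr 2 ^ 4 * ?_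
        exact integral_mono (memLp_truncate hX c).integrable_norm_pow' hX.integrable_norm_pow'
          fun ω => pow_le_pow_left₀ (norm_nonneg _) (norm_truncate_le _ _) 4
    _ ≤ 16 * (κ * v ^ 2) := by
        norm_num
        exact h.integral_norm_pow_four_le hκ

lemma integral_norm_centeredTruncation_sq_add (h : IsCenteredEntry μ X v κ) (c : ℝ) :
    ∫ ω, ‖centeredTruncation μ X c (X ω)‖ ^ 2 ∂μ + ∫ ω, ‖X ω - truncate c (X ω)‖ ^ 2 ∂μ
      + ‖∫ ω, (X ω - truncate c (X ω)) ∂μ‖ ^ 2 = v := by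
  have hX : MemLp X (2 : ℕ) μ := h.memLp_of_le (by lia)
  have hX1 : MemLp X 1 μ := by exact_mod_cast h.memLp_of_le (k := 1) (by lia)
  have hsplit : ∫ ω, ‖truncate c (X ω)‖ ^ 2 ∂μ + ∫ ω, ‖X ω - truncate c (X ω)‖ ^ 2 ∂μ = v := by
    rw [← integral_add (memLp_truncate hX c).integrable_norm_pow'
      (h.memLp_sub_truncate c (k := 2) (by lia)).integrable_norm_pow', ← h.variance]
    simp only [norm_truncate_sq_add_norm_sub_truncate_sq]
  have hvar := integral_norm_sub_integral_sq (memLp_truncate hX c)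
  rw [integral_sub (hX1.integrable le_rfl) ((memLp_truncate hX1 c).integrable le_rfl), h.centered,
    zero_sub, norm_neg]
  simp only [centeredTruncation]
  linarith

lemma integral_norm_centeredTruncation_sq_le (h : IsCenteredEntry μ X v κ) (c : ℝ) :
    ∫ ω, ‖centeredTruncation μ X c (X ω)‖ ^ 2 ∂μ ≤ v := by
  have hnonneg : 0 ≤ ∫ ω, ‖X ω - truncate c (X ω)‖ ^ 2 ∂μ :=
    integral_nonneg fun _ => sq_nonneg _
  linarith [h.integral_norm_centeredTruncation_sq_add c,
    sq_nonneg ‖∫ ω, (X ω - truncate c (X ω)) ∂μ‖]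

lemma le_integral_norm_centeredTruncation_sq (h : IsCenteredEntry μ X v κ) (hκ : 0 ≤ κ)
    (hθ : 1 ≤ θ) :
    v - 2 * (κ * v / θ ^ 16) ≤ ∫ ω, ‖centeredTruncation μ X (v * θ) (X ω)‖ ^ 2 ∂μ := by
  have htail : ∫ ω, ‖X ω - truncate (v * θ) (X ω)‖ ^ 2 ∂μ ≤ κ * v / θ ^ 16 := by
    simpa using h.integral_norm_sub_truncate_pow_le hκ hθ one_ne_zero one_le_two
  have hmean : ‖∫ ω, (X ω - truncate (v * θ) (X ω)) ∂μ‖ ^ 2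
      ≤ ∫ ω, ‖X ω - truncate (v * θ) (X ω)‖ ^ 2 ∂μ :=
    norm_integral_pow_le (h.memLp_sub_truncate _ (by lia)) one_le_two
  linarith [h.integral_norm_centeredTruncation_sq_add (v * θ)]

end IsCenteredEntry

end IsCenteredEntry

/-! ### Chebyshev bounds -/

section Chebyshev

variable {Ω : Type*} [MeasurableSpace Ω] {μ : Measure Ω} [IsProbabilityMeasure μ]
variable {S : Type*} [Fintype S]

lemma variance_sum_le_sum_integral_sq {X : S → Ω → ℝ} (hX : ∀ s, MemLp (X s) 2 μ)
    (hindep : Pairwise fun s t => X s ⟂ᵢ[μ] X t) :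
    Var[∑ s, X s; μ] ≤ ∑ s, ∫ ω, X s ω ^ 2 ∂μ := by
  rw [IndepFun.variance_sum (fun s _ => hX s) fun s _ t _ hst => hindep hst]
  exact Finset.sum_le_sum fun s _ => variance_le_expectation_sq (hX s).1

lemma measureReal_le_abs_sum_sub_le {Y : S → Ω → ℝ} {Z : Ω → ℝ} {t : ℝ} (hZ : MemLp Z 2 μ)
    (hindep : Pairwise fun s t => Y s ⟂ᵢ[μ] Y t) (hident : ∀ s, IdentDistrib (Y s) Z μ μ)
    (ht : 0 < t) :
    μ.real {ω | t ≤ |∑ s, Y s ω - Fintype.card S * ∫ ω, Z ω ∂μ|}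
      ≤ Fintype.card S * Var[Z; μ] / t ^ 2 := by
  have hY : ∀ s, MemLp (Y s) 2 μ := fun s => (hident s).memLp_iff.2 hZ
  have hmean : ∫ ω, (∑ s, Y s) ω ∂μ = Fintype.card S * ∫ ω, Z ω ∂μ := by
    simp only [Finset.sum_apply]
    rw [integral_finsetSum _ fun s _ => (hY s).integrable one_le_two]
    simp [(hident _).integral_eq]
  have hvar : Var[∑ s, Y s; μ] = Fintype.card S * Var[Z; μ] := by
    rw [IndepFun.variance_sum (fun s _ => hY s) fun s _ t _ hst => hindep hst]
    simp [(hident _).variance_eq]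
  have hcheb := meas_ge_le_variance_div_sq (memLp_finsetSum' Finset.univ fun s _ => hY s) ht
  rw [hmean, hvar] at hcheb
  simp only [Finset.sum_apply] at hcheb
  refine ENNReal.toReal_le_of_le_ofReal ?_ hcheb
  have := variance_nonneg Z μ
  positivity

variable {ι ι' : Type*} [Fintype ι] [Fintype ι']

lemma measureReal_le_abs_sum_norm_sq_sub_le {W : Ω → Matrix ι ι' ℂ} {Ws : S → Ω → Matrix ι ι' ℂ}
    {h : ι → ι' → ℂ → ℂ} {t : ℝ} (hentries : iIndepFun (fun p : ι × ι' => fun ω => W ω p.1 p.2) μ)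
    (hindep : iIndepFun Ws μ) (hident : ∀ s, IdentDistrib (Ws s) W μ μ)
    (hh : ∀ i j, Measurable (h i j)) (hL : ∀ i j, MemLp (fun ω => h i j (W ω i j)) (4 : ℕ) μ)
    (ht : 0 < t) :
    μ.real {ω | t ≤ |∑ s, ∑ i, ∑ j, ‖h i j (Ws s ω i j)‖ ^ 2
        - Fintype.card S * ∑ i, ∑ j, ∫ ω, ‖h i j (W ω i j)‖ ^ 2 ∂μ|}
      ≤ Fintype.card S * (∑ i, ∑ j, ∫ ω, ‖h i j (W ω i j)‖ ^ 4 ∂μ) / t ^ 2 := by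
  let f (p : ι × ι') (z : ℂ) : ℝ := ‖h p.1 p.2 z‖ ^ 2
  have hf (p) : Measurable (f p) := (hh p.1 p.2).norm.pow_const 2
  have hfL (p : ι × ι') : MemLp (fun ω => f p (W ω p.1 p.2)) 2 μ := by
    refine (memLp_two_iff_integrable_sq ((hL p.1 p.2).1.norm.pow 2)).2 ?_
    simpa only [Pi.pow_apply, ← pow_mul] using (hL p.1 p.2).integrable_norm_pow'
  let Φ (M : Matrix ι ι' ℂ) : ℝ := ∑ p : ι × ι', f p (M p.1 p.2)
  have hΦ : Measurable Φ := Finset.measurable_sum _ fun p _ => (hf p).comp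
    ((measurable_pi_apply p.2).comp (measurable_pi_apply p.1))
  have hΦW : Φ ∘ W = ∑ p : ι × ι', fun ω => f p (W ω p.1 p.2) := by
    ext ω
    simp [Φ]
  have hvar : Var[Φ ∘ W; μ] ≤ ∑ i, ∑ j, ∫ ω, ‖h i j (W ω i j)‖ ^ 4 ∂μ := by
    rw [hΦW, ← Fintype.sum_prod_type']
    refine (variance_sum_le_sum_integral_sq hfL fun p q hpq =>
      (hentries.indepFun hpq).comp (hf p) (hf q)).trans_eq ?_
    simp only [f, ← pow_mul]
  have hcheb := measureReal_le_abs_sum_sub_le (hΦW ▸ memLp_finsetSum' _ fun p _ => hfL p)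
    (fun s t hst => (hindep.indepFun hst).comp hΦ hΦ) (fun s => (hident s).comp hΦ) ht
  have hmean : ∫ ω, (Φ ∘ W) ω ∂μ = ∑ i, ∑ j, ∫ ω, ‖h i j (W ω i j)‖ ^ 2 ∂μ := by
    simp only [Φ, Function.comp_apply]
    rw [integral_finsetSum _ fun p _ => (hfL p).integrable one_le_two, Fintype.sum_prod_type]
  calc _ = μ.real {ω | t ≤ |∑ s, (Φ ∘ Ws s) ω - Fintype.card S * ∫ ω, (Φ ∘ W) ω ∂μ|} := by
        rw [hmean]
        simp only [Φ, f, Fintype.sum_prod_type, Function.comp_apply]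
    _ ≤ Fintype.card S * Var[Φ ∘ W; μ] / t ^ 2 := hcheb
    _ ≤ _ := by gcongr

end Chebyshev

/-! ### Norm concentration for random matrices -/

section Concentration

variable {ι : Type*} [Fintype ι] [DecidableEq ι]
variable {Ω : Type*} [MeasurableSpace Ω] {μ : Measure Ω} [IsProbabilityMeasure μ]

lemma sum_single_mul_conjTranspose_le {x : ι → ι → ℂ} {r : ℝ} (hrow : ∀ i, ∑ j, ‖x i j‖ ^ 2 ≤ r) :
    ∑ q : ι × ι, single q.1 q.2 (x q.1 q.2) * (single q.1 q.2 (x q.1 q.2))ᴴ ≤ r • 1 := by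
  have hdiag : ∑ q : ι × ι, single q.1 q.2 (x q.1 q.2) * (single q.1 q.2 (x q.1 q.2))ᴴ
      = diagonal fun i => ((∑ j, ‖x i j‖ ^ 2 : ℝ) : ℂ) := by
    rw [← sum_single_eq_diagonal, Fintype.sum_prod_type]
    refine Finset.sum_congr rfl fun i _ => ?_
    simp only [Complex.ofReal_sum, ← singleAddMonoidHom_apply, map_sum]
    simp [Complex.mul_conj']
  rw [hdiag, Matrix.le_iff, ← diagonal_one, ← diagonal_smul, diagonal_sub,
    posSemidef_diagonal_iff]
  intro i
  simpa [sub_nonneg, ← Complex.ofReal_pow, ← Complex.ofReal_sum] using hrow i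

lemma sum_conjTranspose_mul_single_le {x : ι → ι → ℂ} {r : ℝ} (hcol : ∀ j, ∑ i, ‖x i j‖ ^ 2 ≤ r) :
    ∑ q : ι × ι, (single q.1 q.2 (x q.1 q.2))ᴴ * single q.1 q.2 (x q.1 q.2) ≤ r • 1 := by
  rw [← (Equiv.prodComm ι ι).sum_comp]
  simpa using sum_single_mul_conjTranspose_le (x := fun i j => star (x j i)) (r := r)
    (by simpa using hcol)

lemma measureReal_lt_norm_sq_of_entries_le {E : Type*} [MeasurableSpace E] {ξ : ι × ι → Ω → E}
    {f : ι × ι → E → ℂ} {c : ι → ι → ℝ} {v : ℝ} (hmeas : ∀ q, AEMeasurable (ξ q) μ)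
    (hindep : iIndepFun ξ μ) (hf : ∀ q, BoundedMeasurable (f q))
    (hmean : ∀ q, ∫ ω, f q (ξ q ω) ∂μ = 0)
    (hdiff : ∀ i j y z, ‖f (i, j) y - f (i, j) z‖ ^ 2 ≤ c i j)
    (hrow : ∀ i, ∑ j, c i j ≤ v) (hcol : ∀ j, ∑ i, c i j ≤ v) (hv : 0 < v) {p : ℕ} (hp : p ≠ 0)
    {a : ℝ} (ha : 0 < a) :
    μ.real {ω | a * (p * v) < ‖of fun i j => f (i, j) (ξ (i, j) ω)‖ ^ 2}
      ≤ 2 * Fintype.card ι / a ^ p := by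
  let L (q : ι × ι) : ℂ →L[ℝ] Matrix ι ι ℂ :=
    LinearMap.toContinuousLinearMap (singleLinearMap ℝ q.1 q.2)
  let F (q : ι × ι) (x : E) : Matrix ι ι ℂ := L q (f q x)
  have hF_sub (q : ι × ι) (x y : E) : F q x - F q y = single q.1 q.2 (f q x - f q y) :=
    (map_sub (L q) _ _).symm
  have hF_mean (q : ι × ι) : ∫ ω, F q (ξ q ω) ∂μ = 0 := by
    simp only [F]
    rw [ContinuousLinearMap.integral_comp_comm, hmean, map_zero]
    exact ((hf q).integrable (μ.map (ξ q))).comp_aemeasurable (hmeas q)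
  have hsum (ω : Ω) : ∑ q, F q (ξ q ω) = of fun i j => f (i, j) (ξ (i, j) ω) := by
    rw [matrix_eq_sum_single (of _), Fintype.sum_prod_type]
    rfl
  simp only [← hsum]
  refine measureReal_lt_norm_sq_sum_le (F := F) hmeas hindep (fun q => (hf q).clm_apply (L q))
    hF_mean hv (fun y z => ?_) (fun y z => ?_) hp ha <;> simp only [hF_sub]
  · exact sum_single_mul_conjTranspose_le
      (x := fun i j => f (i, j) (y (i, j)) - f (i, j) (z (i, j)))
      fun i => (Finset.sum_le_sum fun j _ => hdiff i j _ _).trans (hrow i)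
  · exact sum_conjTranspose_mul_single_le
      (x := fun i j => f (i, j) (y (i, j)) - f (i, j) (z (i, j)))
      fun j => (Finset.sum_le_sum fun i _ => hdiff i j _ _).trans (hcol j)

theorem measureReal_lt_norm_sq_le_of_indep_entries {X : Ω → Matrix ι ι ℂ} {c : ι → ι → ℝ} {r : ℝ}
    (hmeas : ∀ i j, AEMeasurable (fun ω => X ω i j) μ)
    (hindep : iIndepFun (fun q : ι × ι => fun ω => X ω q.1 q.2) μ)
    (hmean : ∀ i j, ∫ ω, X ω i j ∂μ = 0) (hbound : ∀ ω i j, ‖X ω i j‖ ^ 2 ≤ c i j)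
    (hrow : ∀ i, ∑ j, c i j ≤ r) (hcol : ∀ j, ∑ i, c i j ≤ r) (hr : 0 < r) {p : ℕ} (hp : p ≠ 0)
    {a : ℝ} (ha : 0 < a) :
    μ.real {ω | a * (p * (4 * r)) < ‖X ω‖ ^ 2} ≤ 2 * Fintype.card ι / a ^ p := by
  obtain ⟨ω₀⟩ := μ.nonempty_of_neZero
  have hc (i j) : 0 ≤ c i j := (sq_nonneg _).trans (hbound ω₀ i j)
  have hX (ω : Ω) (i j) : truncate (c i j) (X ω i j) = X ω i j := truncate_of_le (hbound ω i j)
  have hmain := measureReal_lt_norm_sq_of_entries_le (f := fun q => truncate (c q.1 q.2))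
    (fun q => hmeas q.1 q.2) hindep (fun q => BoundedMeasurable.truncate _)
    (fun q => by simpa only [hX] using hmean q.1 q.2)
    (fun i j => norm_truncate_sub_truncate_sq_le (hc i j))
    (fun i => by rw [← Finset.mul_sum]; exact mul_le_mul_of_nonneg_left (hrow i) four_pos.le)
    (fun j => by rw [← Finset.mul_sum]; exact mul_le_mul_of_nonneg_left (hcol j) four_pos.le)
    (by positivity) hp ha
  simp only [hX] at hmain
  exact hmain

variable {S : Type*} [Fintype S] {E : Type*} [MeasurableSpace E] {ξ : S → Ω → E}
  {F : E → Matrix ι ι ℂ}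

theorem measureReal_lt_norm_sq_sum_sub_integral_le [Nonempty S]
    (hmeas : ∀ s, AEMeasurable (ξ s) μ) (hindep : iIndepFun ξ μ) (hF : Measurable F) {ρ : ℝ}
    (hρ : 0 < ρ) (hFρ : ∀ x, ‖F x‖ ≤ ρ) {p : ℕ} (hp : p ≠ 0) {a : ℝ} (ha : 0 < a) :
    μ.real {ω | a * (p * (Fintype.card S * (2 * ρ) ^ 2))
        < ‖∑ s, (F (ξ s ω) - ∫ ω, F (ξ s ω) ∂μ)‖ ^ 2} ≤ 2 * Fintype.card ι / a ^ p := by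
  have hFb : BoundedMeasurable F := ⟨hF, ρ, hFρ⟩
  have hint (s : S) : Integrable (fun ω => F (ξ s ω)) μ :=
    (hFb.integrable (μ.map (ξ s))).comp_aemeasurable (hmeas s)
  have hdiff (x y : E) : ‖F x - F y‖ ^ 2 ≤ (2 * ρ) ^ 2 := by
    gcongr
    exact (norm_sub_le _ _).trans (by linarith [hFρ x, hFρ y])
  have hle (A : Matrix ι ι ℂ) (hA : ‖A‖ ^ 2 ≤ (2 * ρ) ^ 2) :
      A * Aᴴ ≤ ((2 * ρ) ^ 2) • 1 ∧ Aᴴ * A ≤ ((2 * ρ) ^ 2) • 1 := by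
    have hmono : (‖A‖ ^ 2) • (1 : Matrix ι ι ℂ) ≤ ((2 * ρ) ^ 2) • 1 :=
      smul_le_smul_of_nonneg_right hA zero_le_one
    rw [← Algebra.algebraMap_eq_smul_one] at hmono
    exact ⟨CStarAlgebra.mul_star_le_algebraMap_norm_sq.trans hmono,
      CStarAlgebra.star_mul_le_algebraMap_norm_sq.trans hmono⟩
  refine measureReal_lt_norm_sq_sum_le (F := fun s x => F x - ∫ ω, F (ξ s ω) ∂μ) hmeas hindep
    (fun s => hFb.sub (BoundedMeasurable.const _))
    (fun s => by rw [integral_sub (hint s) (integrable_const _)]; simp) (by positivity)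
    (fun x y => ?_) (fun x y => ?_) hp ha <;> simp only [sub_sub_sub_cancel_right]
  · refine (Finset.sum_le_sum fun s _ => (hle _ (hdiff _ _)).1).trans_eq ?_
    simp [← Nat.cast_smul_eq_nsmul ℝ, smul_smul]
  · refine (Finset.sum_le_sum fun s _ => (hle _ (hdiff _ _)).2).trans_eq ?_
    simp [← Nat.cast_smul_eq_nsmul ℝ, smul_smul]

end Concentration

/-! ### The random Kraus matrix is close to its mean -/

section SpectralGap

lemma measurable_kronecker_map_conj {ι : Type*} [Countable ι] :
    Measurable fun A : Matrix ι ι ℂ => A ⊗ₖ A.map (starRingEnd ℂ) := by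
  refine (continuous_matrix fun x y => ?_).measurable
  exact (continuous_id.matrix_elem x.1 y.1).mul
    (Complex.continuous_conj.comp (continuous_id.matrix_elem x.2 y.2))

variable {ι : Type*} [Fintype ι] [DecidableEq ι]
variable {Ω : Type*} [MeasurableSpace Ω] {μ : Measure Ω}

lemma integrable_kronecker_map_conj [IsFiniteMeasure μ] {X : Ω → Matrix ι ι ℂ}
    (hX : AEMeasurable X μ) {M : ℝ} (hM : ∀ ω, ‖X ω‖ ^ 2 ≤ M) :
    Integrable (fun ω => X ω ⊗ₖ (X ω).map (starRingEnd ℂ)) μ :=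
  Integrable.of_bound (measurable_kronecker_map_conj.comp_aemeasurable hX).aestronglyMeasurable M
    (Filter.Eventually.of_forall fun ω => (l2_opNorm_kronecker_map_conj_le _).trans (hM ω))

lemma integral_matrix_apply {M : Ω → Matrix ι ι ℂ} (hM : Integrable M μ) (i j : ι) :
    (∫ ω, M ω ∂μ) i j = ∫ ω, M ω i j ∂μ :=
  ((LinearMap.toContinuousLinearMap (entryLinearMap ℝ ℂ i j)).integral_comp_comm hM).symm

lemma integral_kronecker_map_conj {X : Ω → Matrix ι ι ℂ}
    (hmeas : ∀ i j, AEStronglyMeasurable (fun ω => X ω i j) μ)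
    (hint : Integrable (fun ω => X ω ⊗ₖ (X ω).map (starRingEnd ℂ)) μ)
    (hindep : iIndepFun (fun q : ι × ι => fun ω => X ω q.1 q.2) μ)
    (hmean : ∀ i j, ∫ ω, X ω i j ∂μ = 0) :
    ∫ ω, X ω ⊗ₖ (X ω).map (starRingEnd ℂ) ∂μ
      = diagonalIsometry ι * (of fun i j => ∫ ω, ‖X ω i j‖ ^ 2 ∂μ).map ((↑) : ℝ → ℂ)
        * (diagonalIsometry ι)ᴴ := by
  ext ⟨i, k⟩ ⟨j, l⟩
  rw [integral_matrix_apply hint, diagonalIsometry_mul_mul_conjTranspose_apply]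
  simp only [kroneckerMap_apply, map_apply, of_apply]
  split_ifs with h
  · obtain ⟨rfl, rfl⟩ := h
    rw [← integral_complex_ofReal]
    simp [Complex.mul_conj']
  · have hne : (i, j) ≠ (k, l) := by simpa using h
    have hconj : Measurable (starRingEnd ℂ) := Complex.continuous_conj.measurable
    have hindep' : (fun ω => X ω i j) ⟂ᵢ[μ] fun ω => (starRingEnd ℂ) (X ω k l) :=
      (hindep.indepFun hne).comp measurable_id hconj
    rw [hindep'.integral_fun_mul_eq_mul_integral (hmeas i j)
      (Complex.continuous_conj.comp_aestronglyMeasurable (hmeas k l)), hmean, zero_mul]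

lemma norm_integral_kronecker_sub_truncate_le [IsProbabilityMeasure μ] {X : Ω → Matrix ι ι ℂ}
    (hX : AEMeasurable X μ) {M : ℝ} (hM : ∀ ω, ‖X ω‖ ^ 2 ≤ M) (τ : ℝ) :
    ‖∫ ω, X ω ⊗ₖ (X ω).map (starRingEnd ℂ) ∂μ
        - ∫ ω, truncate τ (X ω) ⊗ₖ (truncate τ (X ω)).map (starRingEnd ℂ) ∂μ‖
      ≤ M * μ.real {ω | τ < ‖X ω‖ ^ 2} := by
  have htrunc (ω : Ω) : ‖truncate τ (X ω)‖ ^ 2 ≤ M :=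
    (pow_le_pow_left₀ (norm_nonneg _) (norm_truncate_le _ _) 2).trans (hM ω)
  have hint := integrable_kronecker_map_conj (X := fun ω => truncate τ (X ω))
    ((measurable_truncate τ).comp_aemeasurable hX) htrunc
  rw [← integral_sub (integrable_kronecker_map_conj hX hM) hint,
    ← setIntegral_eq_integral_of_forall_compl_eq_zero (s := {ω | τ < ‖X ω‖ ^ 2})]
  · refine norm_setIntegral_le_of_norm_le_const (measure_lt_top _ _) fun ω hω => ?_
    rw [truncate_of_lt hω, zero_kronecker, sub_zero]
    exact (l2_opNorm_kronecker_map_conj_le _).trans (hM ω)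
  · intro ω hω
    rw [truncate_of_le (not_lt.1 hω), sub_self]

lemma norm_integral_kronecker_sub_entangledProj_le [IsProbabilityMeasure μ] {X : Ω → Matrix ι ι ℂ}
    (hX : AEMeasurable X μ) (hindep : iIndepFun (fun q : ι × ι => fun ω => X ω q.1 q.2) μ)
    (hmean : ∀ i j, ∫ ω, X ω i j ∂μ = 0) {M : ℝ} (hM : ∀ ω, ‖X ω‖ ^ 2 ≤ M) :
    ‖∫ ω, X ω ⊗ₖ (X ω).map (starRingEnd ℂ) ∂μ - entangledProj ι‖
      ≤ ‖(of fun i j => ∫ ω, ‖X ω i j‖ ^ 2 ∂μ) - averagingMatrix ι‖ := by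
  rw [integral_kronecker_map_conj _ _ hindep hmean, entangledProj_eq, ← Matrix.sub_mul,
    ← Matrix.mul_sub]
  · refine (norm_diagonalIsometry_mul_mul_conjTranspose_le _).trans ?_
    rw [← Matrix.map_sub _ Complex.ofReal_sub]
    exact l2_opNorm_map_ofReal_le _
  · exact fun i j => (AEMeasurable.eval (AEMeasurable.eval hX i) j).aestronglyMeasurable
  · exact integrable_kronecker_map_conj hX hM

lemma norm_sq_le_card_mul {A : Matrix ι ι ℂ} {c : ι → ι → ℝ} {r : ℝ}
    (hA : ∀ i j, ‖A i j‖ ^ 2 ≤ c i j) (hrow : ∀ i, ∑ j, c i j ≤ r) :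
    ‖A‖ ^ 2 ≤ Fintype.card ι * r :=
  calc ‖A‖ ^ 2 ≤ ∑ i, ∑ j, ‖A i j‖ ^ 2 := l2_opNorm_sq_le_sum_norm_sq A
    _ ≤ ∑ _i : ι, r := Finset.sum_le_sum fun i _ =>
        (Finset.sum_le_sum fun j _ => hA i j).trans (hrow i)
    _ = Fintype.card ι * r := by simp

lemma norm_integral_kronecker_truncate_sub_entangledProj_le [IsProbabilityMeasure μ]
    {X : Ω → Matrix ι ι ℂ} (hX : AEMeasurable X μ)
    (hindep : iIndepFun (fun q : ι × ι => fun ω => X ω q.1 q.2) μ)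
    (hmean : ∀ i j, ∫ ω, X ω i j ∂μ = 0) {M : ℝ} (hM : ∀ ω, ‖X ω‖ ^ 2 ≤ M) (τ : ℝ) :
    ‖∫ ω, truncate τ (X ω) ⊗ₖ (truncate τ (X ω)).map (starRingEnd ℂ) ∂μ - entangledProj ι‖
      ≤ M * μ.real {ω | τ < ‖X ω‖ ^ 2}
        + ‖(of fun i j => ∫ ω, ‖X ω i j‖ ^ 2 ∂μ) - averagingMatrix ι‖ := by
  refine (norm_sub_le_norm_sub_add_norm_sub _ _ _).trans (add_le_add ?_
    (norm_integral_kronecker_sub_entangledProj_le hX hindep hmean hM))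
  rw [norm_sub_rev]
  exact norm_integral_kronecker_sub_truncate_le hX hM τ

variable {S : Type*} [Fintype S]

lemma measureReal_exists_mem_le [IsProbabilityMeasure μ] {E : Type*} [MeasurableSpace E]
    {X : Ω → E} {Xs : S → Ω → E} (hident : ∀ s, IdentDistrib (Xs s) X μ μ) {t : Set E}
    (ht : MeasurableSet t) :
    μ.real {ω | ∃ s, Xs s ω ∈ t} ≤ Fintype.card S * μ.real {ω | X ω ∈ t} := by
  rw [Set.ofPred_exists]
  refine (measureReal_iUnion_fintype_le _).trans_eq ?_
  have hs (s : S) : μ.real {ω | Xs s ω ∈ t} = μ.real {ω | X ω ∈ t} :=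
    congrArg ENNReal.toReal ((hident s).measure_mem_eq ht)
  simp [hs]

variable [Nonempty S]

lemma norm_krausMatrix_sub_le (w : S → Matrix ι ι ℂ) (m P : Matrix (ι × ι) (ι × ι) ℂ) :
    ‖krausMatrix w - P‖ ≤ (Fintype.card S : ℝ)⁻¹ *
      ‖∑ s, (w s ⊗ₖ (w s).map (starRingEnd ℂ) - m)‖ + ‖m - P‖ := by
  have hsplit : krausMatrix w - P = (Fintype.card S : ℂ)⁻¹ •
      ∑ s, (w s ⊗ₖ (w s).map (starRingEnd ℂ) - m) + (m - P) := by
    rw [krausMatrix, Finset.sum_sub_distrib, Finset.sum_const, Finset.card_univ, smul_sub,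
      ← Nat.cast_smul_eq_nsmul ℂ, inv_smul_smul₀ (by simp)]
    abel
  rw [hsplit]
  exact (norm_add_le _ _).trans_eq (by simp [norm_smul])

lemma measureReal_lt_norm_average_sub_integral_le [IsProbabilityMeasure μ] {E : Type*}
    [MeasurableSpace E] {ξ : S → Ω → E} {F : E → Matrix ι ι ℂ} (hmeas : ∀ s, AEMeasurable (ξ s) μ)
    (hindep : iIndepFun ξ μ) (hF : Measurable F) {ρ : ℝ} (hρ : 0 < ρ) (hFρ : ∀ x, ‖F x‖ ≤ ρ)
    {p : ℕ} (hp : p ≠ 0) {a : ℝ} (ha : 0 < a) :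
    μ.real {ω | 2 * ρ * √(a * p / Fintype.card S)
        < (Fintype.card S : ℝ)⁻¹ * ‖∑ s, (F (ξ s ω) - ∫ ω, F (ξ s ω) ∂μ)‖}
      ≤ 2 * Fintype.card ι / a ^ p := by
  refine (measureReal_mono fun ω hω => ?_).trans
    (measureReal_lt_norm_sq_sum_sub_integral_le hmeas hindep hF hρ hFρ hp ha)
  have : (0 : ℝ) < Fintype.card S := by exact_mod_cast Fintype.card_pos
  have hsq := pow_lt_pow_left₀ hω.out (by positivity) two_ne_zero
  rw [mul_pow (2 * ρ), mul_pow (Fintype.card S : ℝ)⁻¹, Real.sq_sqrt (by positivity), inv_pow,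
    inv_mul_eq_div, lt_div_iff₀ (by positivity)] at hsq
  refine lt_of_eq_of_lt ?_ hsq
  field_simp

theorem measureReal_lt_norm_krausMatrix_sub_entangledProj_le [IsProbabilityMeasure μ]
    {X : Ω → Matrix ι ι ℂ} {Xs : S → Ω → Matrix ι ι ℂ} {c : ι → ι → ℝ} {r : ℝ}
    (hmeas : AEMeasurable X μ) (hentries : iIndepFun (fun q : ι × ι => fun ω => X ω q.1 q.2) μ)
    (hmean : ∀ i j, ∫ ω, X ω i j ∂μ = 0) (hbound : ∀ ω i j, ‖X ω i j‖ ^ 2 ≤ c i j)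
    (hrow : ∀ i, ∑ j, c i j ≤ r) (hcol : ∀ j, ∑ i, c i j ≤ r) (hr : 0 < r)
    (hindep : iIndepFun Xs μ) (hident : ∀ s, IdentDistrib (Xs s) X μ μ) {p : ℕ} (hp : p ≠ 0)
    {a τ : ℝ} (ha : 0 < a) (hτ : τ = a * (p * (4 * r))) :
    μ.real {ω | 2 * τ * √(a * p / Fintype.card S)
          + Fintype.card ι * r * (2 * Fintype.card ι / a ^ p)
          + ‖(of fun i j => ∫ ω, ‖X ω i j‖ ^ 2 ∂μ) - averagingMatrix ι‖
        < ‖krausMatrix (fun s => Xs s ω) - entangledProj ι‖}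
      ≤ Fintype.card S * (2 * Fintype.card ι / a ^ p) + 2 * Fintype.card (ι × ι) / a ^ p := by
  let F (A : Matrix ι ι ℂ) := truncate τ A ⊗ₖ (truncate τ A).map (starRingEnd ℂ)
  have hF : Measurable F := measurable_kronecker_map_conj.comp (measurable_truncate τ)
  have hτ_pos : 0 < τ := by rw [hτ]; positivity
  have hFτ (A : Matrix ι ι ℂ) : ‖F A‖ ≤ τ :=
    (l2_opNorm_kronecker_map_conj_le _).trans (norm_truncate_sq_le hτ_pos.le A)
  have htail : μ.real {ω | τ < ‖X ω‖ ^ 2} ≤ 2 * Fintype.card ι / a ^ p := hτ ▸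
    measureReal_lt_norm_sq_le_of_indep_entries (fun i j => (hmeas.eval i).eval j) hentries hmean
      hbound hrow hcol hr hp ha
  have hX_le (ω : Ω) : ‖X ω‖ ^ 2 ≤ Fintype.card ι * r := norm_sq_le_card_mul (hbound ω) hrow
  have hbias : ‖∫ ω, F (X ω) ∂μ - entangledProj ι‖
      ≤ Fintype.card ι * r * (2 * Fintype.card ι / a ^ p)
        + ‖(of fun i j => ∫ ω, ‖X ω i j‖ ^ 2 ∂μ) - averagingMatrix ι‖ := by
    refine (norm_integral_kronecker_truncate_sub_entangledProj_le hmeas hentries hmean hX_le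
      τ).trans ?_
    gcongr
  have hcopies := measureReal_exists_mem_le hident (t := {A | τ < ‖A‖ ^ 2})
    (measurableSet_lt measurable_const (measurable_norm.pow_const 2))
  have hfluct := measureReal_lt_norm_average_sub_integral_le (fun s => (hident s).aemeasurable_fst)
    hindep hF hτ_pos hFτ hp ha
  have hF_integral (s : S) : ∫ ω, F (Xs s ω) ∂μ = ∫ ω, F (X ω) ∂μ :=
    ((hident s).comp hF).integral_eq
  simp only [hF_integral] at hfluct
  refine (measureReal_mono fun ω hω => ?_).trans
    ((measureReal_union_le _ _).trans (add_le_add (hcopies.trans ?_) hfluct))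
  · by_contra hgood
    simp only [Set.mem_union, Set.mem_ofPred_eq, not_or, not_exists, not_lt] at hgood hω
    have hFs (s : S) : F (Xs s ω) = Xs s ω ⊗ₖ (Xs s ω).map (starRingEnd ℂ) := by
      simp only [F, truncate_of_le (hgood.1 s)]
    have hle := norm_krausMatrix_sub_le (fun s => Xs s ω) (∫ ω, F (X ω) ∂μ) (entangledProj ι)
    simp only [← hFs] at hle
    linarith [hgood.2]
  · gcongr; exact htail

end SpectralGap

/-! ### Random matrices with a doubly stochastic variance profile -/

section DoublyStochasticProfile

variable {Ω ι : Type*} [MeasurableSpace Ω] {μ : Measure Ω}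

lemma measureReal_le_abs_trace_krausMap_sub_le [Fintype ι] [DecidableEq ι]
    [IsProbabilityMeasure μ] {S : Type*} [Fintype S] [Nonempty S] {W : Ω → Matrix ι ι ℂ}
    {Ws : S → Ω → Matrix ι ι ℂ} {h : ι → ι → ℂ → ℂ} {t : ℝ}
    (hentries : iIndepFun (fun p : ι × ι => fun ω => W ω p.1 p.2) μ) (hindep : iIndepFun Ws μ)
    (hident : ∀ s, IdentDistrib (Ws s) W μ μ) (hh : ∀ i j, Measurable (h i j))
    (hL : ∀ i j, MemLp (fun ω => h i j (W ω i j)) (4 : ℕ) μ) (ht : 0 < t) :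
    μ.real {ω | t ≤ |(krausMap (fun s => of fun i j => h i j (Ws s ω i j)) 1).trace.re
        - ∑ i, ∑ j, ∫ ω, ‖h i j (W ω i j)‖ ^ 2 ∂μ|}
      ≤ (∑ i, ∑ j, ∫ ω, ‖h i j (W ω i j)‖ ^ 4 ∂μ) / (Fintype.card S * t ^ 2) := by
  have hS : (0 : ℝ) < Fintype.card S := by exact_mod_cast Fintype.card_pos
  refine (measureReal_mono fun ω hω => ?_).trans
    ((measureReal_le_abs_sum_norm_sq_sub_le hentries hindep hident hh hL
      (mul_pos hS ht)).trans_eq (by field_simp))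
  rw [Set.mem_ofPred_eq, trace_krausMap_one_re] at hω
  simp only [of_apply] at hω
  rw [Set.mem_ofPred_eq, ← le_inv_mul_iff₀ hS, ← abs_of_pos (inv_pos.2 hS), ← abs_mul, mul_sub,
    inv_mul_cancel_left₀ hS.ne']
  exact hω

/-- The entrywise centered truncation of a value `A` of the random matrix `W`, the entry `(i, j)`
being cut off at `‖A i j‖ ^ 2 ≤ η i j * θ`. -/
noncomputable def truncatedMatrix (μ : Measure Ω) (W : Ω → Matrix ι ι ℂ) (η : Matrix ι ι ℝ)
    (θ : ℝ) (A : Matrix ι ι ℂ) : Matrix ι ι ℂ :=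
  of fun i j => centeredTruncation μ (fun ω => W ω i j) (η i j * θ) (A i j)

lemma measurable_truncatedMatrix (W : Ω → Matrix ι ι ℂ) (η : Matrix ι ι ℝ) (θ : ℝ) :
    Measurable (truncatedMatrix μ W η θ) :=
  measurable_pi_lambda _ fun i => measurable_pi_lambda _ fun j =>
    measurable_centeredTruncation.comp ((measurable_pi_apply j).comp (measurable_pi_apply i))

lemma sub_truncatedMatrix (W : Ω → Matrix ι ι ℂ) (η : Matrix ι ι ℝ) (θ : ℝ) (A : Matrix ι ι ℂ) :
    A - truncatedMatrix μ W η θ A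
      = of fun i j => A i j - centeredTruncation μ (fun ω => W ω i j) (η i j * θ) (A i j) :=
  rfl

variable [Fintype ι]

/-- A random matrix `W` with independent centered entries whose variances `η i j` form a doubly
stochastic matrix and whose moments of order 36 are at most `κ * η i j ^ 18`. -/
structure HasDoublyStochasticProfile (μ : Measure Ω) (W : Ω → Matrix ι ι ℂ) (η : Matrix ι ι ℝ)
    (κ : ℝ) : Prop where
  indep : iIndepFun (fun (p : ι × ι) ω => W ω p.1 p.2) μ
  entry : ∀ i j, IsCenteredEntry μ (fun ω => W ω i j) (η i j) κ
  row_sum : ∀ i, ∑ j, η i j = 1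
  col_sum : ∀ j, ∑ i, η i j = 1

namespace HasDoublyStochasticProfile

variable {W : Ω → Matrix ι ι ℂ} {η : Matrix ι ι ℝ} {κ κ' θ : ℝ}

lemma mono (h : HasDoublyStochasticProfile μ W η κ) (hκ : κ ≤ κ') :
    HasDoublyStochasticProfile μ W η κ' where
  indep := h.indep
  entry i j := (h.entry i j).mono hκ
  row_sum := h.row_sum
  col_sum := h.col_sum

lemma sum_sum_eq_card (h : HasDoublyStochasticProfile μ W η κ) :
    ∑ i, ∑ j, η i j = Fintype.card ι := by
  simp [h.row_sum]

lemma sum_sum_sq_le_card (h : HasDoublyStochasticProfile μ W η κ) :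
    ∑ i, ∑ j, η i j ^ 2 ≤ Fintype.card ι := by
  have hη (i j : ι) : 0 ≤ η i j := (h.entry i j).variance_nonneg
  refine (Finset.sum_le_sum fun i _ => Finset.sum_le_sum fun j _ =>
    pow_le_of_le_one (hη i j) ?_ two_ne_zero).trans_eq h.sum_sum_eq_card
  exact (h.row_sum i) ▸ Finset.single_le_sum (fun k _ => hη i k) (Finset.mem_univ j)

variable [IsProbabilityMeasure μ]

lemma norm_variance_truncatedMatrix_sub_averagingMatrix_le [DecidableEq ι]
    (h : HasDoublyStochasticProfile μ W η κ) (hκ : 0 ≤ κ) (hθ : 1 ≤ θ) :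
    ‖(of fun i j => ∫ ω, ‖truncatedMatrix μ W η θ (W ω) i j‖ ^ 2 ∂μ) - averagingMatrix ι‖
      ≤ 2 * κ / θ ^ 16 + Matrix.sval η 1 := by
  have hη (i j : ι) : 0 ≤ η i j := (h.entry i j).variance_nonneg
  refine (norm_sub_le_norm_sub_add_norm_sub _ η _).trans
    (add_le_add ?_ (norm_sub_averagingMatrix_le_sval hη h.row_sum h.col_sum))
  have hentry (i j : ι) : ‖((of fun i j => ∫ ω, ‖truncatedMatrix μ W η θ (W ω) i j‖ ^ 2 ∂μ)
      - η) i j‖ ≤ 2 * κ / θ ^ 16 * η i j := by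
    have hle := (h.entry i j).integral_norm_centeredTruncation_sq_le (η i j * θ)
    have hge := (h.entry i j).le_integral_norm_centeredTruncation_sq hκ hθ
    have hpos : 0 ≤ 2 * κ / θ ^ 16 * η i j := mul_nonneg (by positivity) (hη i j)
    have heq : 2 * (κ * η i j / θ ^ 16) = 2 * κ / θ ^ 16 * η i j := by ring
    simp only [Matrix.sub_apply, truncatedMatrix, of_apply, Real.norm_eq_abs, abs_le]
    constructor <;> linarith
  refine l2_opNorm_le_of_sum_norm_le (by positivity) (fun i => ?_) fun j => ?_
  · refine (Finset.sum_le_sum fun j _ => hentry i j).trans_eq ?_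
    rw [← Finset.mul_sum, h.row_sum, mul_one]
  · refine (Finset.sum_le_sum fun i _ => hentry i j).trans_eq ?_
    rw [← Finset.mul_sum, h.col_sum, mul_one]

lemma le_sum_integral_norm_truncatedMatrix_sq (h : HasDoublyStochasticProfile μ W η κ)
    (hκ : 0 ≤ κ) (hθ : 1 ≤ θ) :
    Fintype.card ι * (1 - 2 * κ / θ ^ 16)
      ≤ ∑ i, ∑ j, ∫ ω, ‖truncatedMatrix μ W η θ (W ω) i j‖ ^ 2 ∂μ :=
  calc Fintype.card ι * (1 - 2 * κ / θ ^ 16) = ∑ i, ∑ j, (η i j - 2 * (κ * η i j / θ ^ 16)) := by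
        simp only [Finset.sum_sub_distrib, ← Finset.mul_sum, ← Finset.sum_div, h.sum_sum_eq_card]
        ring
    _ ≤ _ := Finset.sum_le_sum fun i _ => Finset.sum_le_sum fun j _ =>
        (h.entry i j).le_integral_norm_centeredTruncation_sq hκ hθ

lemma sum_integral_norm_truncatedMatrix_pow_four_le (h : HasDoublyStochasticProfile μ W η κ)
    (hκ : 1 ≤ κ) (θ : ℝ) :
    ∑ i, ∑ j, ∫ ω, ‖truncatedMatrix μ W η θ (W ω) i j‖ ^ 4 ∂μ ≤ 16 * (κ * Fintype.card ι) :=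
  calc _ ≤ ∑ i, ∑ j, 16 * (κ * η i j ^ 2) := Finset.sum_le_sum fun i _ =>
        Finset.sum_le_sum fun j _ =>
          (h.entry i j).integral_norm_centeredTruncation_pow_four_le hκ _
    _ ≤ 16 * (κ * Fintype.card ι) := by
        simp only [← Finset.mul_sum]
        gcongr
        exact h.sum_sum_sq_le_card

lemma sum_integral_norm_sub_truncatedMatrix_sq_le (h : HasDoublyStochasticProfile μ W η κ)
    (hκ : 0 ≤ κ) (hθ : 1 ≤ θ) :
    ∑ i, ∑ j, ∫ ω, ‖(W ω - truncatedMatrix μ W η θ (W ω)) i j‖ ^ 2 ∂μ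
      ≤ 4 * κ / θ ^ 16 * Fintype.card ι :=
  calc _ ≤ ∑ i, ∑ j, 2 ^ (2 * 1) * (κ * η i j ^ 1 / θ ^ 16) := Finset.sum_le_sum fun i _ =>
        Finset.sum_le_sum fun j _ => (h.entry i j).integral_norm_sub_centeredTruncation_pow_le hκ
          hθ one_ne_zero one_le_two
    _ = 4 * κ / θ ^ 16 * Fintype.card ι := by
        simp only [← Finset.mul_sum, ← Finset.sum_div, pow_one, h.sum_sum_eq_card]
        ring

lemma sum_integral_norm_sub_truncatedMatrix_pow_four_le (h : HasDoublyStochasticProfile μ W η κ)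
    (hκ : 0 ≤ κ) (hθ : 1 ≤ θ) :
    ∑ i, ∑ j, ∫ ω, ‖(W ω - truncatedMatrix μ W η θ (W ω)) i j‖ ^ 4 ∂μ
      ≤ 16 * (κ * Fintype.card ι / θ ^ 16) :=
  calc _ ≤ ∑ i, ∑ j, 2 ^ (2 * 2) * (κ * η i j ^ 2 / θ ^ 16) := Finset.sum_le_sum fun i _ =>
        Finset.sum_le_sum fun j _ => (h.entry i j).integral_norm_sub_centeredTruncation_pow_le hκ
          hθ two_ne_zero le_rfl
    _ ≤ 16 * (κ * Fintype.card ι / θ ^ 16) := by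
        simp only [← Finset.mul_sum, ← Finset.sum_div]
        norm_num
        gcongr
        exact h.sum_sum_sq_le_card

variable {S : Type*} [Fintype S] [Nonempty S] {Ws : S → Ω → Matrix ι ι ℂ}

lemma measureReal_lt_norm_krausMatrix_truncatedMatrix_sub_le [DecidableEq ι] [Nonempty ι]
    (h : HasDoublyStochasticProfile μ W η κ) (hκ : 0 ≤ κ) (hθ : 1 ≤ θ) (hindep : iIndepFun Ws μ)
    (hident : ∀ s, IdentDistrib (Ws s) W μ μ) {p : ℕ} (hp : p ≠ 0) {a : ℝ} (ha : 0 < a) :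
    μ.real {ω | 2 * (a * (p * (4 * (4 * θ)))) * √(a * p / Fintype.card S)
          + Fintype.card ι * (4 * θ) * (2 * Fintype.card ι / a ^ p)
          + (2 * κ / θ ^ 16 + Matrix.sval η 1)
        < ‖krausMatrix (fun s => truncatedMatrix μ W η θ (Ws s ω)) - entangledProj ι‖}
      ≤ Fintype.card S * (2 * Fintype.card ι / a ^ p) + 2 * Fintype.card (ι × ι) / a ^ p := by
  have hT : Measurable (truncatedMatrix μ W η θ) := measurable_truncatedMatrix W η θ
  have hη (i j : ι) : 0 ≤ η i j := (h.entry i j).variance_nonneg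
  have hW (s : S) : AEMeasurable W μ := (hident s).aemeasurable_snd
  refine (measureReal_mono fun ω hω => ?_).trans
    (measureReal_lt_norm_krausMatrix_sub_entangledProj_le
      (c := fun i j => 4 * (η i j * θ)) (r := 4 * θ)
      (hT.comp_aemeasurable (hW (Classical.arbitrary S)))
      (h.indep.comp (fun q => centeredTruncation μ (fun ω => W ω q.1 q.2) (η q.1 q.2 * θ))
        fun _ => measurable_centeredTruncation)
      (fun i j => integral_centeredTruncation
        (by exact_mod_cast (h.entry i j).memLp_of_le (k := 1) (by lia)))
      (fun ω i j => norm_centeredTruncation_sq_le (mul_nonneg (hη i j) (by positivity)) _)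
      (fun i => ?_) (fun j => ?_) (by positivity) (hindep.comp _ fun _ => hT)
      (fun s => (hident s).comp hT) hp ha rfl)
  · refine lt_of_le_of_lt ?_ hω.out
    gcongr
    exact h.norm_variance_truncatedMatrix_sub_averagingMatrix_le hκ hθ
  · rw [← Finset.mul_sum, ← Finset.sum_mul, h.row_sum, one_mul]
  · rw [← Finset.mul_sum, ← Finset.sum_mul, h.col_sum, one_mul]

lemma measureReal_trace_krausMap_truncatedMatrix_lt_le [DecidableEq ι] [Nonempty ι]
    (h : HasDoublyStochasticProfile μ W η κ) (hκ : 1 ≤ κ) (hθ : 1 ≤ θ) (hindep : iIndepFun Ws μ)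
    (hident : ∀ s, IdentDistrib (Ws s) W μ μ) (hS : Fintype.card S = θ ^ 16) :
    μ.real {ω | (krausMap (fun s => truncatedMatrix μ W η θ (Ws s ω)) 1).trace.re
        < Fintype.card ι * (1 - (1 / θ ^ 8 + 2 * κ / θ ^ 16))} ≤ 16 * κ / Fintype.card ι := by
  have : (0 : ℝ) < Fintype.card ι := by exact_mod_cast Fintype.card_pos
  refine (measureReal_mono fun ω hω => ?_).trans
    ((measureReal_le_abs_trace_krausMap_sub_le (t := Fintype.card ι / θ ^ 8)
      (h := fun i j => centeredTruncation μ (fun ω => W ω i j) (η i j * θ)) h.indep hindep hident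
      (fun _ _ => measurable_centeredTruncation)
      (fun i j => (h.entry i j).memLp_centeredTruncation _ (by lia)) (by positivity)).trans ?_)
  · rw [Set.mem_ofPred_eq, le_abs]
    right
    have hmean := h.le_sum_integral_norm_truncatedMatrix_sq (by linarith) hθ
    have hlt := hω.out
    have hmargin : Fintype.card ι * (1 - (1 / θ ^ 8 + 2 * κ / θ ^ 16))
        = Fintype.card ι * (1 - 2 * κ / θ ^ 16) - Fintype.card ι / θ ^ 8 := by ring
    simp only [truncatedMatrix, of_apply] at hmean hlt
    linarith
  · calc _ ≤ 16 * (κ * Fintype.card ι) / (Fintype.card S * (Fintype.card ι / θ ^ 8) ^ 2) := by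
          gcongr
          exact h.sum_integral_norm_truncatedMatrix_pow_four_le hκ θ
      _ = 16 * κ / Fintype.card ι := by
          rw [hS]
          field_simp

lemma measureReal_lt_trace_krausMap_sub_truncatedMatrix_le [DecidableEq ι] [Nonempty ι]
    (h : HasDoublyStochasticProfile μ W η κ) (hκ : 0 ≤ κ) (hθ : 1 ≤ θ) (hindep : iIndepFun Ws μ)
    (hident : ∀ s, IdentDistrib (Ws s) W μ μ) (hS : Fintype.card S = θ ^ 16) :
    μ.real {ω | (4 * κ + 1) / θ ^ 16 * Fintype.card ι
        < (krausMap (fun s => Ws s ω - truncatedMatrix μ W η θ (Ws s ω)) 1).trace.re}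
      ≤ 16 * κ / Fintype.card ι := by
  have : (0 : ℝ) < Fintype.card ι := by exact_mod_cast Fintype.card_pos
  refine (measureReal_mono fun ω hω => ?_).trans
    ((measureReal_le_abs_trace_krausMap_sub_le (t := Fintype.card ι / θ ^ 16)
      (h := fun i j z => z - centeredTruncation μ (fun ω => W ω i j) (η i j * θ) z) h.indep hindep
      hident (fun _ _ => measurable_id.sub measurable_centeredTruncation)
      (fun i j => ((h.entry i j).memLp_of_le (by lia)).sub
        ((h.entry i j).memLp_centeredTruncation _ (by lia))) (by positivity)).trans ?_)
  · rw [Set.mem_ofPred_eq, le_abs]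
    left
    have hmean := h.sum_integral_norm_sub_truncatedMatrix_sq_le hκ hθ
    have hlt := hω.out
    have hmargin : (4 * κ + 1) / θ ^ 16 * Fintype.card ι
        = 4 * κ / θ ^ 16 * Fintype.card ι + Fintype.card ι / θ ^ 16 := by ring
    simp only [sub_truncatedMatrix, of_apply] at hmean hlt
    linarith
  · calc _ ≤ 16 * (κ * Fintype.card ι / θ ^ 16)
            / (Fintype.card S * (Fintype.card ι / θ ^ 16) ^ 2) := by
          gcongr
          exact h.sum_integral_norm_sub_truncatedMatrix_pow_four_le hκ hθ
      _ = 16 * κ / Fintype.card ι := by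
          rw [hS]
          field_simp

end HasDoublyStochasticProfile

end DoublyStochasticProfile

/-! ### Choice of parameters -/

section Parameters

lemma exists_pow_sixteen_eq_and_log_le {n d : ℕ} (hn : 2 ≤ n) (hd : Real.log n ^ 8 ≤ d) :
    ∃ (θ : ℝ) (p : ℕ), 1 ≤ θ ∧ θ ^ 16 = d ∧ p ≠ 0 ∧ Real.log n ≤ p ∧ p ≤ 2 * θ ^ 2 := by
  have hlog : 0 < Real.log n := Real.log_pos (by exact_mod_cast hn)
  have hd1 : (1 : ℝ) ≤ d := by
    exact_mod_cast Nat.one_le_iff_ne_zero.2 (Nat.cast_pos.1 ((pow_pos hlog 8).trans_le hd)).ne'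
  have hθ : ((d : ℝ) ^ (16 : ℝ)⁻¹) ^ 16 = d :=
    Real.rpow_inv_natCast_pow (n := 16) (by positivity) (by lia)
  have hθ1 : 1 ≤ (d : ℝ) ^ (16 : ℝ)⁻¹ := Real.one_le_rpow hd1 (by positivity)
  have hlog_le : Real.log n ≤ ((d : ℝ) ^ (16 : ℝ)⁻¹) ^ 2 := by
    refine le_of_pow_le_pow_left₀ (n := 8) (by lia) (by positivity) ?_
    rwa [← pow_mul, hθ]
  refine ⟨_, ⌈Real.log n⌉₊, hθ1, hθ, (Nat.ceil_pos.2 hlog).ne', Nat.le_ceil _, ?_⟩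
  linarith [Nat.ceil_lt_add_one hlog.le, one_le_pow₀ (n := 2) hθ1]

variable {n p : ℕ} {θ : ℝ}

lemma natCast_pow_le_exp_pow (hn : n ≠ 0) (hp : Real.log n ≤ p) (k : ℕ) :
    (n : ℝ) ^ k ≤ Real.exp k ^ p := by
  rw [← Real.exp_nat_mul, mul_comm, Real.exp_nat_mul]
  gcongr
  exact (Real.log_le_iff_le_exp (by positivity)).1 hp

lemma two_mul_mul_sqrt_le {a : ℝ} (ha : 0 ≤ a) (hθ : 0 < θ) (hp : p ≤ 2 * θ ^ 2) :
    2 * (a * (p * (4 * (4 * θ)))) * √(a * p / θ ^ 16) ≤ 64 * a * √(2 * a) / θ ^ 4 := by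
  have hsqrt : √(a * p / θ ^ 16) ≤ √(2 * a) / θ ^ 7 := by
    rw [Real.sqrt_le_iff, div_pow, Real.sq_sqrt (by positivity)]
    refine ⟨by positivity, ?_⟩
    calc a * p / θ ^ 16 ≤ a * (2 * θ ^ 2) / θ ^ 16 := by gcongr
      _ = 2 * a / (θ ^ 7) ^ 2 := by field_simp
  calc 2 * (a * (p * (4 * (4 * θ)))) * √(a * p / θ ^ 16)
      ≤ 2 * (a * (2 * θ ^ 2 * (4 * (4 * θ)))) * (√(2 * a) / θ ^ 7) := by gcongr
    _ = 64 * a * √(2 * a) / θ ^ 4 := by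
        field_simp
        ring

lemma mul_mul_two_mul_div_le {A : ℝ} (hn : n ≠ 0) (hθ : 1 ≤ θ) (hθn : θ ^ 16 ≤ (n : ℝ) ^ 2)
    (hA : (n : ℝ) ^ 12 ≤ A) : n * (4 * θ) * (2 * n / A) ≤ 8 / θ ^ 4 := by
  have hn1 : (1 : ℝ) ≤ n := by exact_mod_cast Nat.one_le_iff_ne_zero.2 hn
  calc n * (4 * θ) * (2 * n / A) ≤ n * (4 * θ) * (2 * n / n ^ 12) := by gcongr
    _ = 8 * θ ^ 5 / (θ ^ 4 * n ^ 10) := by field_simp; ring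
    _ ≤ 8 * n ^ 10 / (θ ^ 4 * n ^ 10) := by
        gcongr
        calc θ ^ 5 ≤ θ ^ 16 := pow_le_pow_right₀ hθ (by lia)
          _ ≤ (n : ℝ) ^ 2 := hθn
          _ ≤ (n : ℝ) ^ 10 := pow_le_pow_right₀ hn1 (by lia)
    _ = 8 / θ ^ 4 := by field_simp

lemma mul_div_add_mul_div_le {A : ℝ} (hn : n ≠ 0) (hθn : θ ^ 16 ≤ (n : ℝ) ^ 2)
    (hA : (n : ℝ) ^ 12 ≤ A) : θ ^ 16 * (2 * n / A) + 2 * (n * n) / A ≤ 4 / (n : ℝ) := by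
  have hn1 : (1 : ℝ) ≤ n := by exact_mod_cast Nat.one_le_iff_ne_zero.2 hn
  have : 0 < A := (pow_pos (by positivity) 12).trans_le hA
  calc θ ^ 16 * (2 * n / A) + 2 * (n * n) / A
      ≤ (n : ℝ) ^ 2 * (2 * n / n ^ 12) + 2 * (n * n) / n ^ 12 := by gcongr
    _ = (2 / (n : ℝ) ^ 8 + 2 / n ^ 9) / n := by field_simp
    _ ≤ (2 / 1 + 2 / 1) / (n : ℝ) := by gcongr <;> exact one_le_pow₀ hn1
    _ = 4 / (n : ℝ) := by norm_num

/-- The constant `E` in the bound `E / θ ^ 4` for the distance of the truncated Kraus matrix to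
`entangledProj`. -/
noncomputable def gapConstant (κ K : ℝ) : ℝ :=
  64 * Real.exp 12 * √(2 * Real.exp 12) + 8 + 2 * κ + K

/-- The constant `C` in the bound `1 - C / θ ^ 8` for the spectral radius of the Kraus matrix. -/
noncomputable def lossConstant (κ K : ℝ) : ℝ :=
  2 * (1 + 2 * κ + 32 * gapConstant κ K ^ 2 + (1 + 4 * (4 * κ + 1)))

lemma gap_threshold_le {κ K σ : ℝ} (hκ : 0 ≤ κ) (hK : 0 ≤ K) (hn : n ≠ 0) (hθ : 1 ≤ θ)
    (hθn : θ ^ 16 ≤ (n : ℝ) ^ 2) (hlog : Real.log n ≤ p) (hp : p ≤ 2 * θ ^ 2)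
    (hσ : σ ≤ K / θ ^ 8) :
    2 * (Real.exp 12 * (p * (4 * (4 * θ)))) * √(Real.exp 12 * p / θ ^ 16)
      + n * (4 * θ) * (2 * n / Real.exp 12 ^ p) + (2 * κ / θ ^ 16 + σ)
      ≤ gapConstant κ K / θ ^ 4 := by
  have hfluct := two_mul_mul_sqrt_le (Real.exp_pos 12).le (by positivity) hp
  have htail := mul_mul_two_mul_div_le hn hθ hθn (natCast_pow_le_exp_pow hn hlog 12)
  have hbias : 2 * κ / θ ^ 16 ≤ 2 * κ / θ ^ 4 := by gcongr; lia
  have hprofile : K / θ ^ 8 ≤ K / θ ^ 4 := by gcongr; lia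
  push_cast at htail
  rw [gapConstant, add_div, add_div, add_div]
  linarith

lemma loss_le {κ : ℝ} (hκ : 0 ≤ κ) (K : ℝ) (hθ : 1 ≤ θ) :
    2 * (1 / θ ^ 8 + 2 * κ / θ ^ 16 + 32 * (gapConstant κ K / θ ^ 4) ^ 2
      + (1 + 4 * (4 * κ + 1)) / θ ^ 8) ≤ lossConstant κ K / θ ^ 8 := by
  have hbias : 2 * κ / θ ^ 16 ≤ 2 * κ / θ ^ 8 := by gcongr; lia
  calc _ ≤ 2 * (1 / θ ^ 8 + 2 * κ / θ ^ 8 + 32 * (gapConstant κ K / θ ^ 4) ^ 2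
        + (1 + 4 * (4 * κ + 1)) / θ ^ 8) := by gcongr
    _ = lossConstant κ K / θ ^ 8 := by
        rw [lossConstant]
        ring

end Parameters

section LargestEigenvalue

variable {Ω : Type*} [MeasurableSpace Ω] {μ : Measure Ω} [IsProbabilityMeasure μ]

lemma one_sub_ofReal_le_measure {s : Set Ω} {δ : ℝ} (hδ : μ.real sᶜ ≤ δ) :
    1 - ENNReal.ofReal δ ≤ μ s := by
  rw [tsub_le_iff_right, ← measure_univ (μ := μ)]
  refine (measure_univ_le_add_compl s).trans ?_
  gcongr
  exact (ENNReal.le_ofReal_iff_toReal_le (measure_ne_top μ _)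
    (measureReal_nonneg.trans hδ)).2 hδ

theorem HasDoublyStochasticProfile.measureReal_no_large_root_le {n d p : ℕ}
    {η : Matrix (Fin n) (Fin n) ℝ} {W : Ω → Matrix (Fin n) (Fin n) ℂ}
    {Ws : Fin d → Ω → Matrix (Fin n) (Fin n) ℂ} {κ K θ : ℝ}
    (h : HasDoublyStochasticProfile μ W η κ) (hκ : 1 ≤ κ) (hK : 0 ≤ K) (hn : n ≠ 0)
    (hθ : 1 ≤ θ) (hθd : θ ^ 16 = d) (hdn : d ≤ n ^ 2) (hp : p ≠ 0) (hlog : Real.log n ≤ p)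
    (hpθ : p ≤ 2 * θ ^ 2) (hsval : Matrix.sval η 1 ≤ K / θ ^ 8) (hindep : iIndepFun Ws μ)
    (hident : ∀ s, IdentDistrib (Ws s) W μ μ) :
    μ.real {ω | ∃ z ∈ (krausMatrix fun s => Ws s ω).charpoly.roots,
      1 - lossConstant κ K / θ ^ 8 ≤ ‖z‖}ᶜ ≤ (4 + 32 * κ) / n := by
  have : NeZero n := ⟨hn⟩
  have hd : 0 < d := by exact_mod_cast hθd ▸ (by positivity : 0 < θ ^ 16)
  have : NeZero d := ⟨hd.ne'⟩
  have hκ0 : 0 ≤ κ := by linarith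
  have hθn : θ ^ 16 ≤ (n : ℝ) ^ 2 := by rw [hθd]; exact_mod_cast hdn
  have hS : (Fintype.card (Fin d) : ℝ) = θ ^ 16 := by rw [Fintype.card_fin, hθd]
  have hgap := h.measureReal_lt_norm_krausMatrix_truncatedMatrix_sub_le hκ0 hθ hindep hident hp
    (Real.exp_pos 12)
  have hmain := h.measureReal_trace_krausMap_truncatedMatrix_lt_le hκ hθ hindep hident hS
  have hrest := h.measureReal_lt_trace_krausMap_sub_truncatedMatrix_le hκ0 hθ hindep hident hS
  have hprob := mul_div_add_mul_div_le hn hθn (natCast_pow_le_exp_pow hn hlog 12)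
  simp only [hS, Fintype.card_prod, Nat.cast_mul] at hgap hmain hrest
  refine (measureReal_mono fun ω hω => ?_).trans ((measureReal_union_le _ _).trans <|
    (add_le_add ((measureReal_union_le _ _).trans (add_le_add hgap hmain)) hrest).trans ?_)
  · by_contra hgood
    simp only [Set.mem_union, Set.mem_ofPred_eq, not_or, not_lt, and_assoc] at hgood
    obtain ⟨hgap, hmain, hrest⟩ := hgood
    rw [show θ ^ 16 = (θ ^ 8) ^ 2 by ring] at hrest
    obtain ⟨z, hz, hle⟩ := exists_root_charpoly_krausMatrix_norm_ge
      (hgap.trans (by simpa using gap_threshold_le hκ0 hK hn hθ hθn hlog hpθ hsval)) hmain hrest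
      (one_le_pow₀ hθ) (by positivity) (by positivity)
    simp only [add_sub_cancel] at hz
    exact hω ⟨z, hz, by linarith [loss_le hκ0 K hθ]⟩
  · simp only [Fintype.card_fin]
    rw [add_div, show 32 * κ / n = 16 * κ / n + 16 * κ / n by ring]
    push_cast at hprob
    linarith

end LargestEigenvalue

theorem largest_eigenvalue_bound_general (κ K : ℝ) :
    ∃ C : ℝ, 0 < C ∧ ∀ n d : ℕ, 2 ≤ n → d ≤ n ^ 2 → Real.log n ^ 8 ≤ (d : ℝ) →
      ∀ (Ω : Type*) (_ : MeasurableSpace Ω) (μ : Measure Ω), IsProbabilityMeasure μ →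
      ∀ (η : Matrix (Fin n) (Fin n) ℝ) (W : Ω → Matrix (Fin n) (Fin n) ℂ)
        (Ws : Fin d → Ω → Matrix (Fin n) (Fin n) ℂ),
        HasDoublyStochasticProfile μ W η κ →
        Matrix.sval η 1 ≤ K / Real.sqrt d →
        iIndepFun Ws μ →
        (∀ s, IdentDistrib (Ws s) W μ μ) →
        1 - ENNReal.ofReal (C / n) ≤
          μ {ω | ∃ z ∈ (krausMatrix fun s => Ws s ω).charpoly.roots,
            1 - C / Real.sqrt d ≤ ‖z‖} := by
  let κ' := max κ 1
  have hκ' : 1 ≤ κ' := le_max_right κ 1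
  have hloss : 0 ≤ lossConstant κ' |K| := by unfold lossConstant; positivity
  refine ⟨lossConstant κ' |K| + (4 + 32 * κ'), by positivity, ?_⟩
  intro n d hn hdn hd Ω _ μ _ η W Ws h hsval hindep hident
  obtain ⟨θ, p, hθ, hθd, hp, hlog, hpθ⟩ := exists_pow_sixteen_eq_and_log_le hn hd
  have hsqrt : √(d : ℝ) = θ ^ 8 := by
    rw [← hθd, show θ ^ 16 = (θ ^ 8) ^ 2 by ring, Real.sqrt_sq (by positivity)]
  rw [hsqrt] at hsval ⊢
  have hsval' : Matrix.sval η 1 ≤ |K| / θ ^ 8 := hsval.trans (by gcongr; exact le_abs_self K)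
  have hprob := (h.mono (le_max_left κ 1)).measureReal_no_large_root_le hκ' (abs_nonneg K)
    (by lia) hθ hθd hdn hp hlog hpθ hsval' hindep hident
  refine one_sub_ofReal_le_measure
    ((measureReal_mono (Set.compl_subset_compl.2 ?_)).trans (hprob.trans ?_))
  · rintro ω ⟨z, hz, hle⟩
    refine ⟨z, hz, hle.trans' ?_⟩
    gcongr
    exact le_add_of_nonneg_right (by positivity)
  · gcongr ?_ / (n : ℝ)
    exact le_add_of_nonneg_left hloss

lemma PaperAssumptions.hasDoublyStochasticProfile {Ω : Type*} [MeasurableSpace Ω]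
    {μ : Measure Ω} {n : ℕ} {K K' β : ℝ} {η : Matrix (Fin n) (Fin n) ℝ}
    {W : Ω → Matrix (Fin n) (Fin n) ℂ} (h : PaperAssumptions μ n K K' β η W)
    (hrow : ∀ i, ∑ j, η i j = 1) (hcol : ∀ j, ∑ i, η i j = 1) :
    HasDoublyStochasticProfile μ W η ((K * 18 ^ β) ^ 18) where
  indep := h.entries_indep
  entry i j :=
    { memLp := by exact_mod_cast h.entries_memLp i j 36
      centered := h.entries_centered i j
      variance := h.entries_variance i j
      moment_le := by
        have hnonneg : 0 ≤ ∫ ω, ‖W ω i j‖ ^ 36 ∂μ := integral_nonneg fun _ => by positivity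
        have hpow := pow_le_pow_left₀ (by positivity) (h.moment_growth 18 (by lia) i j) 18
        rw [one_div, Real.rpow_inv_natCast_pow hnonneg (by lia), mul_pow] at hpow
        exact_mod_cast hpow }
  row_sum := hrow
  col_sum := hcol

/-- Largest eigenvalue bound (Section 3 of the paper): under Assumptions 1–4 with `η` doubly
stochastic, `s_2(η) ≤ K''/√d` and `d ≥ (log n)^8`, with probability at least `1 − C_β/n`,
the matrix `M_Φ = (1/d) ∑_s W_s ⊗ conj(W_s)` has an eigenvalue (a root of its characteristic
polynomial) of modulus at least `1 − C_β/√d`. -/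
theorem largest_eigenvalue_bound :
    ∀ K K' K'' β : ℝ, 0 < K → 0 < K' → 0 < K'' → 0 ≤ β →
    ∃ Cβ : ℝ, 0 < Cβ ∧
    ∀ n d : ℕ, 2 ≤ n → d ≤ n ^ 2 → Real.log n ^ 8 ≤ (d : ℝ) →
    ∀ (Ω : Type) (_ : MeasurableSpace Ω) (μ : Measure Ω), IsProbabilityMeasure μ →
    ∀ (η : Matrix (Fin n) (Fin n) ℝ) (W : Ω → Matrix (Fin n) (Fin n) ℂ)
      (Ws : Fin d → Ω → Matrix (Fin n) (Fin n) ℂ),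
      PaperAssumptions μ n K K' β η W →
      (∀ i j, 0 ≤ η i j) →
      (∀ i, ∑ j, η i j = 1) →
      (∀ j, ∑ i, η i j = 1) →
      Matrix.sval η 1 ≤ K'' / Real.sqrt d →
      iIndepFun Ws μ →
      (∀ s, IdentDistrib (Ws s) W μ μ) →
      1 - ENNReal.ofReal (Cβ / n) ≤
        μ {ω | ∃ z ∈ ((d : ℂ)⁻¹ • ∑ s,
              (Ws s ω ⊗ₖ (Ws s ω).map (starRingEnd ℂ))).charpoly.roots,
            1 - Cβ / Real.sqrt d ≤ ‖z‖} := by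
  intro K K' K'' β _ _ _ _
  obtain ⟨C, hC, hbound⟩ := largest_eigenvalue_bound_general ((K * 18 ^ β) ^ 18) K''
  refine ⟨C, hC, fun n d hn hdn hd Ω _ μ _ η W Ws hW _ hrow hcol hsval hindep hident => ?_⟩
  simpa only [krausMatrix, Fintype.card_fin] using hbound n d hn hdn hd Ω _ μ inferInstance η W Ws
    (hW.hasDoublyStochasticProfile hrow hcol) hsval hindep hident
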